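/- arXiv:1603.08750 — 5 statements merged into one kernel-verified Lean document; each statement's English description precedes it below -/
import Mathlib

section
/- Let λ > 0, let k be a controller kernel for λ and let l be the inverse controller kernel for λ. Then for all (x,y) ∈ T, l(x,y) − k(x,y) = ∫_x^y k(x,ξ) l(ξ,y) dξ. -/
open MeasureTheory

noncomputable section

/-- The closed triangle `T = {(x, y) : 0 ≤ x ≤ y ≤ 1}`. -/
def T : Set (ℝ × ℝ) := {q : ℝ × ℝ | 0 ≤ q.1 ∧ q.1 ≤ q.2 ∧ q.2 ≤ 1}

/-- Partial derivative in the first variable. -/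
def pdx (f : ℝ → ℝ → ℝ) (x y : ℝ) : ℝ := deriv (fun x' => f x' y) x

/-- Partial derivative in the second variable. -/
def pdy (f : ℝ → ℝ → ℝ) (x y : ℝ) : ℝ := deriv (fun y' => f x y') y

/-- A controller kernel for `lam`. -/
def IsControllerKernel (lam : ℝ) (k : ℝ → ℝ → ℝ) : Prop :=
  ContDiff ℝ 3 (Function.uncurry k) ∧
  (∀ x y : ℝ, (x, y) ∈ T →
    pdx (pdx (pdx k)) x y + pdy (pdy (pdy k)) x y + pdx k x y + pdy k x y = -lam * k x y) ∧
  (∀ x ∈ Set.Icc (0:ℝ) 1, k x 1 = 0) ∧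
  (∀ x ∈ Set.Icc (0:ℝ) 1, k x x = 0) ∧
  (∀ x ∈ Set.Icc (0:ℝ) 1, pdx k x x = lam / 3 * (1 - x))

/-- The inverse controller kernel for `lam`. -/
def IsInverseControllerKernel (lam : ℝ) (l : ℝ → ℝ → ℝ) : Prop :=
  ContDiff ℝ 3 (Function.uncurry l) ∧
  (∀ x y : ℝ, (x, y) ∈ T →
    pdx (pdx (pdx l)) x y + pdy (pdy (pdy l)) x y + pdx l x y + pdy l x y = lam * l x y) ∧
  (∀ x ∈ Set.Icc (0:ℝ) 1, l x 1 = 0) ∧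
  (∀ x ∈ Set.Icc (0:ℝ) 1, l x x = 0) ∧
  (∀ x ∈ Set.Icc (0:ℝ) 1, pdx l x x = lam / 3 * (1 - x))

/-!
The operator of the kernel equations factors as `∂ₓ³ + ∂ᵧ³ + ∂ₓ + ∂ᵧ = (∂ₓ + ∂ᵧ) (A + 1)` with the
elliptic operator `A = ∂ₓ² - ∂ₓ∂ᵧ + ∂ᵧ²`, and on compositions of Volterra kernels it obeys a Leibniz
rule up to terms on the diagonal. The diagonal data `(λ/3)(1 - x)` make these terms cancel in
`m = l - k - k ∗ l`, so `m` solves the homogeneous equation with zero Cauchy data on the diagonal.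

By the factorization, `A m + m` is constant along parallels to the diagonal, so each difference `v`
of `m` and a translate of `m` along the diagonal satisfies `A v + v = 0`, again with zero Cauchy
data. The energy density `e = v² + |∇v|²` of such a `v` satisfies `A (log e) ≥ -1`, and
`A (τ x (c - y)) = τ`, so for `τ > 1` the product of `e` and `exp (τ x (c - y))` has no interior
maximum where `e > 0`. A maximum on the legs is impossible for large `τ`, and on the diagonal
`e = 0`; hence `v = 0`. So `m` itself is constant along parallels to the diagonal, and vanishes
since it does on the side `y = 1`.
-/

open Set Filter Topology Function

section PartialDerivatives

variable {f g : ℝ → ℝ → ℝ} {m n : WithTop ℕ∞} {x y : ℝ}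

lemma pdx_eq_fderiv (hf : DifferentiableAt ℝ (uncurry f) (x, y)) :
    pdx f x y = fderiv ℝ (uncurry f) (x, y) (1, 0) := by
  have hline : HasDerivAt (fun r : ℝ => (r, y)) (1, 0) x :=
    (hasDerivAt_id x).prodMk (hasDerivAt_const x y)
  exact (hf.hasFDerivAt.comp_hasDerivAt x hline).deriv

lemma pdy_eq_fderiv (hf : DifferentiableAt ℝ (uncurry f) (x, y)) :
    pdy f x y = fderiv ℝ (uncurry f) (x, y) (0, 1) := by
  have hline : HasDerivAt (fun r : ℝ => (x, r)) (0, 1) y :=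
    (hasDerivAt_const y x).prodMk (hasDerivAt_id y)
  exact (hf.hasFDerivAt.comp_hasDerivAt y hline).deriv

lemma hasDerivAt_comp_curve {u v : ℝ → ℝ} {u' v' s : ℝ}
    (hf : DifferentiableAt ℝ (uncurry f) (u s, v s)) (hu : HasDerivAt u u' s)
    (hv : HasDerivAt v v' s) :
    HasDerivAt (fun r => f (u r) (v r)) (u' * pdx f (u s) (v s) + v' * pdy f (u s) (v s)) s := by
  have hcomp : HasDerivAt (uncurry f ∘ fun r => (u r, v r))
      (fderiv ℝ (uncurry f) (u s, v s) (u', v')) s :=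
    hf.hasFDerivAt.comp_hasDerivAt s (hu.prodMk hv)
  have hdir : (u', v') = u' • ((1 : ℝ), (0 : ℝ)) + v' • ((0 : ℝ), (1 : ℝ)) := by simp
  rwa [hdir, map_add, map_smul, map_smul, ← pdx_eq_fderiv hf, ← pdy_eq_fderiv hf] at hcomp

lemma hasDerivAt_pdx (hf : DifferentiableAt ℝ (uncurry f) (x, y)) :
    HasDerivAt (fun x' => f x' y) (pdx f x y) x := by
  simpa using hasDerivAt_comp_curve hf (hasDerivAt_id x) (hasDerivAt_const x y)

lemma hasDerivAt_pdy (hf : DifferentiableAt ℝ (uncurry f) (x, y)) :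
    HasDerivAt (fun y' => f x y') (pdy f x y) y := by
  simpa using hasDerivAt_comp_curve hf (hasDerivAt_const y x) (hasDerivAt_id y)

lemma hasDerivAt_diagonal (hf : DifferentiableAt ℝ (uncurry f) (x, x)) :
    HasDerivAt (fun r => f r r) (pdx f x x + pdy f x x) x := by
  simpa using hasDerivAt_comp_curve hf (hasDerivAt_id x) (hasDerivAt_id x)

lemma contDiff_pdx (hf : ContDiff ℝ n (uncurry f)) (hmn : m + 1 ≤ n) :
    ContDiff ℝ m (uncurry (pdx f)) := by
  have hd : Differentiable ℝ (uncurry f) := (hf.of_le (le_add_self.trans hmn)).differentiable_one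
  have h : uncurry (pdx f) = fun p => fderiv ℝ (uncurry f) p (1, 0) :=
    funext fun p => pdx_eq_fderiv (hd p)
  exact h ▸ (hf.fderiv_right hmn).clm_apply contDiff_const

lemma contDiff_pdy (hf : ContDiff ℝ n (uncurry f)) (hmn : m + 1 ≤ n) :
    ContDiff ℝ m (uncurry (pdy f)) := by
  have hd : Differentiable ℝ (uncurry f) := (hf.of_le (le_add_self.trans hmn)).differentiable_one
  have h : uncurry (pdy f) = fun p => fderiv ℝ (uncurry f) p (0, 1) :=
    funext fun p => pdy_eq_fderiv (hd p)
  exact h ▸ (hf.fderiv_right hmn).clm_apply contDiff_const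

lemma pdx_pdy_comm (hf : ContDiff ℝ 2 (uncurry f)) : pdx (pdy f) = pdy (pdx f) := by
  have hd : Differentiable ℝ (uncurry f) := hf.differentiable two_ne_zero
  have hd' : Differentiable ℝ (fderiv ℝ (uncurry f)) :=
    (hf.fderiv_right (m := 1) (by norm_num)).differentiable_one
  have hx : uncurry (pdx f) = fun p => fderiv ℝ (uncurry f) p (1, 0) :=
    funext fun p => pdx_eq_fderiv (hd p)
  have hy : uncurry (pdy f) = fun p => fderiv ℝ (uncurry f) p (0, 1) :=
    funext fun p => pdy_eq_fderiv (hd p)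
  funext x y
  have hsymm : IsSymmSndFDerivAt ℝ (uncurry f) (x, y) :=
    hf.contDiffAt.isSymmSndFDerivAt (by simp)
  rw [pdx_eq_fderiv ((contDiff_pdy hf (by norm_num)).differentiable_one _),
    pdy_eq_fderiv ((contDiff_pdx hf (by norm_num)).differentiable_one _), hx, hy,
    fderiv_clm_apply (hd' _) (by fun_prop), fderiv_clm_apply (hd' _) (by fun_prop)]
  simpa using hsymm.eq (1, 0) (0, 1)

lemma pdx_eventuallyEq (h : uncurry f =ᶠ[𝓝 (x, y)] uncurry g) :
    uncurry (pdx f) =ᶠ[𝓝 (x, y)] uncurry (pdx g) := by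
  filter_upwards [eventually_eventually_nhds.2 h] with p hp
  have hline : ContinuousAt (fun r => (r, p.2)) p.1 := by fun_prop
  exact EventuallyEq.deriv_eq (hline.eventually hp)

lemma pdy_eventuallyEq (h : uncurry f =ᶠ[𝓝 (x, y)] uncurry g) :
    uncurry (pdy f) =ᶠ[𝓝 (x, y)] uncurry (pdy g) := by
  filter_upwards [eventually_eventually_nhds.2 h] with p hp
  have hline : ContinuousAt (fun r => (p.1, r)) p.2 := by fun_prop
  exact EventuallyEq.deriv_eq (hline.eventually hp)

lemma pdx_neg : pdx (-f) = -pdx f := funext₂ fun _ _ => deriv.fun_neg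

lemma pdy_neg : pdy (-f) = -pdy f := funext₂ fun _ _ => deriv.fun_neg

lemma pdx_add (hf : Differentiable ℝ (uncurry f)) (hg : Differentiable ℝ (uncurry g)) :
    pdx (f + g) = pdx f + pdx g :=
  funext₂ fun _ _ => ((hasDerivAt_pdx (hf _)).add (hasDerivAt_pdx (hg _))).deriv

lemma pdy_add (hf : Differentiable ℝ (uncurry f)) (hg : Differentiable ℝ (uncurry g)) :
    pdy (f + g) = pdy f + pdy g :=
  funext₂ fun _ _ => ((hasDerivAt_pdy (hf _)).add (hasDerivAt_pdy (hg _))).deriv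

lemma pdx_sub (hf : Differentiable ℝ (uncurry f)) (hg : Differentiable ℝ (uncurry g)) :
    pdx (f - g) = pdx f - pdx g :=
  funext₂ fun _ _ => ((hasDerivAt_pdx (hf _)).sub (hasDerivAt_pdx (hg _))).deriv

lemma pdy_sub (hf : Differentiable ℝ (uncurry f)) (hg : Differentiable ℝ (uncurry g)) :
    pdy (f - g) = pdy f - pdy g :=
  funext₂ fun _ _ => ((hasDerivAt_pdy (hf _)).sub (hasDerivAt_pdy (hg _))).deriv

lemma pdx_mul (hf : Differentiable ℝ (uncurry f)) (hg : Differentiable ℝ (uncurry g)) :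
    pdx (f * g) = pdx f * g + f * pdx g :=
  funext₂ fun _ _ => ((hasDerivAt_pdx (hf _)).mul (hasDerivAt_pdx (hg _))).deriv

lemma pdy_mul (hf : Differentiable ℝ (uncurry f)) (hg : Differentiable ℝ (uncurry g)) :
    pdy (f * g) = pdy f * g + f * pdy g :=
  funext₂ fun _ _ => ((hasDerivAt_pdy (hf _)).mul (hasDerivAt_pdy (hg _))).deriv

lemma pdx_sq (hf : Differentiable ℝ (uncurry f)) : pdx (f ^ 2) = 2 * (f * pdx f) := by
  rw [sq, pdx_mul hf hf]
  ring

lemma pdy_sq (hf : Differentiable ℝ (uncurry f)) : pdy (f ^ 2) = 2 * (f * pdy f) := by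
  rw [sq, pdy_mul hf hf]
  ring

end PartialDerivatives

section DirectionalDerivatives

variable {f φ : ℝ → ℝ → ℝ} {m n : WithTop ℕ∞} {a b x y : ℝ}

/-- The derivative of `f` in the direction `(a, b)`, as a function of the two coordinates. -/
def dirDeriv (a b : ℝ) (f : ℝ → ℝ → ℝ) (x y : ℝ) : ℝ := a * pdx f x y + b * pdy f x y

lemma contDiff_dirDeriv (hf : ContDiff ℝ n (uncurry f)) (hmn : m + 1 ≤ n) :
    ContDiff ℝ m (uncurry (dirDeriv a b f)) :=
  (contDiff_const.mul (contDiff_pdx hf hmn)).add (contDiff_const.mul (contDiff_pdy hf hmn))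

lemma hasDerivAt_line (hf : Differentiable ℝ (uncurry f)) (s : ℝ) :
    HasDerivAt (fun r => f (x + r * a) (y + r * b))
      (dirDeriv a b f (x + s * a) (y + s * b)) s := by
  have hx : HasDerivAt (fun r => x + r * a) a s := by
    simpa using ((hasDerivAt_id s).mul_const a).const_add x
  have hy : HasDerivAt (fun r => y + r * b) b s := by
    simpa using ((hasDerivAt_id s).mul_const b).const_add y
  exact hasDerivAt_comp_curve (hf _) hx hy

lemma dirDeriv_one_zero : dirDeriv 1 0 f = pdx f := by
  funext x y
  simp [dirDeriv]

lemma dirDeriv_zero_one : dirDeriv 0 1 f = pdy f := by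
  funext x y
  simp [dirDeriv]

lemma dirDeriv_one_neg_one : dirDeriv 1 (-1) f = pdx f - pdy f := by
  funext x y
  simp [dirDeriv, sub_eq_add_neg]

lemma dirDeriv_one_one : dirDeriv 1 1 f = pdx f + pdy f := by
  funext x y
  simp [dirDeriv]

lemma dirDeriv_one_one_pdx_sub_pdy (hf : ContDiff ℝ 2 (uncurry f)) :
    dirDeriv 1 1 (pdx f) - dirDeriv 1 1 (pdy f) = pdx (pdx f) - pdy (pdy f) := by
  rw [dirDeriv_one_one, dirDeriv_one_one, pdx_pdy_comm hf]
  ring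

lemma dirDeriv_one_one_dirDeriv (hf : ContDiff ℝ 2 (uncurry f)) :
    dirDeriv 1 1 (dirDeriv 1 1 f) = dirDeriv 1 1 (pdx f) + dirDeriv 1 1 (pdy f) := by
  have hfx := (contDiff_pdx (m := 1) hf (by norm_num)).differentiable_one
  have hfy := (contDiff_pdy (m := 1) hf (by norm_num)).differentiable_one
  simp only [dirDeriv_one_one]
  rw [pdx_add hfx hfy, pdy_add hfx hfy]
  ring

lemma dirDeriv_one_one_eq_of_diagonal {φ : ℝ → ℝ} {φ' : ℝ}
    (hf : DifferentiableAt ℝ (uncurry f) (x, x)) (h : ∀ᶠ r in 𝓝 x, f r r = φ r)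
    (hφ : HasDerivAt φ φ' x) : dirDeriv 1 1 f x x = φ' := by
  rw [dirDeriv_one_one]
  exact (hasDerivAt_diagonal hf).unique (hφ.congr_of_eventuallyEq h)

lemma eq_of_dirDeriv_one_one_eq_zero {d : ℝ} (hf : Differentiable ℝ (uncurry f))
    (hd : 0 ≤ d) (h : ∀ r ∈ Icc 0 d, dirDeriv 1 1 f (x + r) (y + r) = 0) :
    f (x + d) (y + d) = f x y := by
  have hderiv : ∀ r, HasDerivAt (fun r => f (x + r) (y + r)) (dirDeriv 1 1 f (x + r) (y + r)) r :=
    fun r => by simpa using hasDerivAt_line (a := 1) (b := 1) (x := x) (y := y) hf r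
  have hconst := constant_of_has_deriv_right_zero
    (fun r _ => (hderiv r).continuousAt.continuousWithinAt)
    (fun r hr => h r (Ico_subset_Icc_self hr) ▸ (hderiv r).hasDerivWithinAt) d ⟨hd, le_rfl⟩
  simpa using hconst

lemma nonpos_of_isLocalMax_of_hasDerivAt {g g' : ℝ → ℝ} {c s : ℝ}
    (hg : ∀ r, HasDerivAt g (g' r) r) (hg' : HasDerivAt g' c s) (hmax : IsLocalMax g s) :
    c ≤ 0 := by
  by_contra! hc
  have hderiv : deriv g = g' := funext fun r => (hg r).deriv
  have hmin : IsLocalMin g s :=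
    isLocalMin_of_deriv_deriv_pos (by rwa [hderiv, hg'.deriv]) hmax.deriv_eq_zero
      (hg s).continuousAt
  have hconst : g =ᶠ[𝓝 s] fun _ => g s := by
    filter_upwards [hmin, hmax] with r hle hge using le_antisymm hge hle
  have hzero : g' =ᶠ[𝓝 s] fun _ => 0 := by simpa [hderiv] using hconst.deriv
  exact hc.ne' (hg'.unique ((hasDerivAt_const s (0 : ℝ)).congr_of_eventuallyEq hzero))

/-- The second derivative test for `log e + φ`, cleared of denominators. -/
lemma mul_sub_sq_add_nonpos_of_isLocalMax_mul_exp {e e' φ φ' : ℝ → ℝ} {e'' φ'' s : ℝ}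
    (he : ∀ r, HasDerivAt e (e' r) r) (he' : HasDerivAt e' e'' s)
    (hφ : ∀ r, HasDerivAt φ (φ' r) r) (hφ' : HasDerivAt φ' φ'' s) (hpos : 0 < e s)
    (hmax : IsLocalMax (fun r => e r * Real.exp (φ r)) s) :
    e s * e'' - e' s ^ 2 + φ'' * e s ^ 2 ≤ 0 := by
  have hg : ∀ r, HasDerivAt (fun r => e r * Real.exp (φ r))
      ((e' r + e r * φ' r) * Real.exp (φ r)) r := fun r =>
    ((he r).mul (hφ r).exp).congr_deriv (by ring)
  have hcrit : e' s + e s * φ' s = 0 := by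
    simpa [Real.exp_ne_zero] using hmax.hasDerivAt_eq_zero (hg s)
  have hg' : HasDerivAt (fun r => (e' r + e r * φ' r) * Real.exp (φ r))
      ((e'' + e' s * φ' s + e s * φ'') * Real.exp (φ s)) s :=
    ((he'.add ((he s).mul hφ')).mul (hφ s).exp).congr_deriv
      (by simp only [Pi.add_apply, Pi.mul_apply]; linear_combination
            Real.exp (φ s) * φ' s * hcrit)
  have hsecond : e'' + e' s * φ' s + e s * φ'' ≤ 0 :=
    nonpos_of_mul_nonpos_left (nonpos_of_isLocalMax_of_hasDerivAt hg hg' hmax) (Real.exp_pos _)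
  calc e s * e'' - e' s ^ 2 + φ'' * e s ^ 2
      = e s * (e'' + e' s * φ' s + e s * φ'') := by linear_combination -e' s * hcrit
    _ ≤ 0 := mul_nonpos_of_nonneg_of_nonpos hpos.le hsecond

lemma dirDeriv_dirDeriv_le_of_isLocalMax_mul_exp (hf : ContDiff ℝ 2 (uncurry f))
    (hφ : ContDiff ℝ 2 (uncurry φ)) (hpos : 0 < f x y)
    (hmax : IsLocalMax (fun p : ℝ × ℝ => f p.1 p.2 * Real.exp (φ p.1 p.2)) (x, y)) (a b : ℝ) :
    f x y * dirDeriv a b (dirDeriv a b f) x y - dirDeriv a b f x y ^ 2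
      + dirDeriv a b (dirDeriv a b φ) x y * f x y ^ 2 ≤ 0 := by
  have hf' : Differentiable ℝ (uncurry (dirDeriv a b f)) :=
    (contDiff_dirDeriv hf (by norm_num)).differentiable_one
  have hφ' : Differentiable ℝ (uncurry (dirDeriv a b φ)) :=
    (contDiff_dirDeriv hφ (by norm_num)).differentiable_one
  have hline : ContinuousAt (fun r : ℝ => (x + r * a, y + r * b)) 0 := by fun_prop
  have hmax₀ : IsLocalMax (fun p : ℝ × ℝ => f p.1 p.2 * Real.exp (φ p.1 p.2))
      (x + 0 * a, y + 0 * b) := by simpa using hmax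
  have hmax_line : IsLocalMax
      (fun r => f (x + r * a) (y + r * b) * Real.exp (φ (x + r * a) (y + r * b))) 0 :=
    hline.eventually hmax₀
  simpa using mul_sub_sq_add_nonpos_of_isLocalMax_mul_exp
    (hasDerivAt_line (hf.differentiable two_ne_zero)) (hasDerivAt_line hf' 0)
    (hasDerivAt_line (hφ.differentiable two_ne_zero)) (hasDerivAt_line hφ' 0)
    (by simpa using hpos) hmax_line

end DirectionalDerivatives

section ObliqueLaplacian

variable {f g v φ : ℝ → ℝ → ℝ} {n : WithTop ℕ∞} {x y : ℝ}

/-- The Laplacian of the plane in oblique coordinates: up to a factor, the sum of the second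
derivatives in the directions `(1, 0)`, `(0, 1)` and `(1, -1)`. It is the elliptic part of
`∂ₓ³ + ∂ᵧ³ = (∂ₓ + ∂ᵧ)(∂ₓ² - ∂ₓ∂ᵧ + ∂ᵧ²)`. -/
def obliqueLaplacian (f : ℝ → ℝ → ℝ) : ℝ → ℝ → ℝ :=
  pdx (pdx f) - pdx (pdy f) + pdy (pdy f)

/-- The squared length of the gradient belonging to `obliqueLaplacian`, normalised by
`obliqueLaplacian_sq`. -/
def obliqueGradSq (f : ℝ → ℝ → ℝ) : ℝ → ℝ → ℝ :=
  pdx f ^ 2 + pdy f ^ 2 + (pdx f - pdy f) ^ 2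

/-- The energy density of a solution `v` of `obliqueLaplacian v + v = 0`. -/
def energyDensity (v : ℝ → ℝ → ℝ) : ℝ → ℝ → ℝ := v ^ 2 + obliqueGradSq v

lemma obliqueLaplacian_add (hf : ContDiff ℝ 2 (uncurry f)) (hg : ContDiff ℝ 2 (uncurry g)) :
    obliqueLaplacian (f + g) = obliqueLaplacian f + obliqueLaplacian g := by
  have hf₀ := hf.differentiable two_ne_zero
  have hg₀ := hg.differentiable two_ne_zero
  have hfx := (contDiff_pdx (m := 1) hf (by norm_num)).differentiable_one
  have hgx := (contDiff_pdx (m := 1) hg (by norm_num)).differentiable_one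
  have hfy := (contDiff_pdy (m := 1) hf (by norm_num)).differentiable_one
  have hgy := (contDiff_pdy (m := 1) hg (by norm_num)).differentiable_one
  simp only [obliqueLaplacian, pdx_add hf₀ hg₀, pdy_add hf₀ hg₀, pdx_add hfx hgx,
    pdx_add hfy hgy, pdy_add hfy hgy]
  ring

lemma obliqueLaplacian_sub (hf : ContDiff ℝ 2 (uncurry f)) (hg : ContDiff ℝ 2 (uncurry g)) :
    obliqueLaplacian (f - g) = obliqueLaplacian f - obliqueLaplacian g := by
  have hf₀ := hf.differentiable two_ne_zero
  have hg₀ := hg.differentiable two_ne_zero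
  have hfx := (contDiff_pdx (m := 1) hf (by norm_num)).differentiable_one
  have hgx := (contDiff_pdx (m := 1) hg (by norm_num)).differentiable_one
  have hfy := (contDiff_pdy (m := 1) hf (by norm_num)).differentiable_one
  have hgy := (contDiff_pdy (m := 1) hg (by norm_num)).differentiable_one
  simp only [obliqueLaplacian, pdx_sub hf₀ hg₀, pdy_sub hf₀ hg₀, pdx_sub hfx hgx,
    pdx_sub hfy hgy, pdy_sub hfy hgy]
  ring

lemma obliqueLaplacian_sq (hf : ContDiff ℝ 2 (uncurry f)) :
    obliqueLaplacian (f ^ 2) = 2 * f * obliqueLaplacian f + obliqueGradSq f := by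
  have hf₀ := hf.differentiable two_ne_zero
  have hfx := (contDiff_pdx (m := 1) hf (by norm_num)).differentiable_one
  have hfy := (contDiff_pdy (m := 1) hf (by norm_num)).differentiable_one
  have hffx : Differentiable ℝ (uncurry (f * pdx f)) := hf₀.mul hfx
  have hffy : Differentiable ℝ (uncurry (f * pdy f)) := hf₀.mul hfy
  simp only [obliqueLaplacian, obliqueGradSq, pdx_sq hf₀, pdy_sq hf₀, two_mul,
    pdx_add hffx hffx, pdx_add hffy hffy, pdy_add hffy hffy, pdx_mul hf₀ hfx, pdx_mul hf₀ hfy,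
    pdy_mul hf₀ hfy]
  ring

lemma contDiff_obliqueLaplacian (hf : ContDiff ℝ 3 (uncurry f)) :
    ContDiff ℝ 1 (uncurry (obliqueLaplacian f)) := by
  have hfx : ContDiff ℝ 2 (uncurry (pdx f)) := contDiff_pdx hf (by norm_num)
  have hfy : ContDiff ℝ 2 (uncurry (pdy f)) := contDiff_pdy hf (by norm_num)
  exact ((contDiff_pdx hfx (by norm_num)).sub (contDiff_pdx hfy (by norm_num))).add
    (contDiff_pdy hfy (by norm_num))

lemma pdx_obliqueLaplacian (hf : ContDiff ℝ 3 (uncurry f)) :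
    pdx (obliqueLaplacian f) = obliqueLaplacian (pdx f) := by
  have hfx : ContDiff ℝ 2 (uncurry (pdx f)) := contDiff_pdx hf (by norm_num)
  have hfy : ContDiff ℝ 2 (uncurry (pdy f)) := contDiff_pdy hf (by norm_num)
  have hxx := (contDiff_pdx (m := 1) hfx (by norm_num)).differentiable_one
  have hxy := (contDiff_pdx (m := 1) hfy (by norm_num)).differentiable_one
  have hyy := (contDiff_pdy (m := 1) hfy (by norm_num)).differentiable_one
  have hsub : Differentiable ℝ (uncurry (pdx (pdx f) - pdx (pdy f))) := hxx.sub hxy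
  simp only [obliqueLaplacian]
  rw [pdx_add hsub hyy, pdx_sub hxx hxy, pdx_pdy_comm hfy,
    pdx_pdy_comm (hf.of_le (by norm_num))]

lemma pdy_obliqueLaplacian (hf : ContDiff ℝ 3 (uncurry f)) :
    pdy (obliqueLaplacian f) = obliqueLaplacian (pdy f) := by
  have hfx : ContDiff ℝ 2 (uncurry (pdx f)) := contDiff_pdx hf (by norm_num)
  have hfy : ContDiff ℝ 2 (uncurry (pdy f)) := contDiff_pdy hf (by norm_num)
  have hxx := (contDiff_pdx (m := 1) hfx (by norm_num)).differentiable_one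
  have hxy := (contDiff_pdx (m := 1) hfy (by norm_num)).differentiable_one
  have hyy := (contDiff_pdy (m := 1) hfy (by norm_num)).differentiable_one
  have hsub : Differentiable ℝ (uncurry (pdx (pdx f) - pdx (pdy f))) := hxx.sub hxy
  simp only [obliqueLaplacian]
  rw [pdy_add hsub hyy, pdy_sub hxx hxy, ← pdx_pdy_comm hfx, ← pdx_pdy_comm hfy,
    ← pdx_pdy_comm (hf.of_le (by norm_num))]

lemma two_mul_obliqueLaplacian (hf : ContDiff ℝ 2 (uncurry f)) :
    2 * obliqueLaplacian f = dirDeriv 1 0 (dirDeriv 1 0 f) + dirDeriv 0 1 (dirDeriv 0 1 f)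
      + dirDeriv 1 (-1) (dirDeriv 1 (-1) f) := by
  have hfx := (contDiff_pdx (m := 1) hf (by norm_num)).differentiable_one
  have hfy := (contDiff_pdy (m := 1) hf (by norm_num)).differentiable_one
  simp only [dirDeriv_one_zero, dirDeriv_zero_one, dirDeriv_one_neg_one, obliqueLaplacian]
  rw [pdx_sub hfx hfy, pdy_sub hfx hfy, pdx_pdy_comm hf]
  ring

lemma obliqueLaplacian_le_of_isLocalMax_mul_exp (hf : ContDiff ℝ 2 (uncurry f))
    (hφ : ContDiff ℝ 2 (uncurry φ)) (hpos : 0 < f x y)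
    (hmax : IsLocalMax (fun p : ℝ × ℝ => f p.1 p.2 * Real.exp (φ p.1 p.2)) (x, y)) :
    2 * f x y * obliqueLaplacian f x y - obliqueGradSq f x y
      + 2 * obliqueLaplacian φ x y * f x y ^ 2 ≤ 0 := by
  have hdir := dirDeriv_dirDeriv_le_of_isLocalMax_mul_exp hf hφ hpos hmax
  have hΔf := congrFun₂ (two_mul_obliqueLaplacian hf) x y
  have hΔφ := congrFun₂ (two_mul_obliqueLaplacian hφ) x y
  have hgrad : obliqueGradSq f x y
      = dirDeriv 1 0 f x y ^ 2 + dirDeriv 0 1 f x y ^ 2 + dirDeriv 1 (-1) f x y ^ 2 := by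
    simp only [dirDeriv_one_zero, dirDeriv_zero_one, dirDeriv_one_neg_one]
    rfl
  simp only [Pi.mul_apply, Pi.add_apply, Pi.ofNat_apply] at hΔf hΔφ
  rw [hgrad]
  linear_combination hdir 1 0 + hdir 0 1 + hdir 1 (-1) + f x y * hΔf + f x y ^ 2 * hΔφ

end ObliqueLaplacian

section EnergyInequality

variable {v φ : ℝ → ℝ → ℝ} {x y : ℝ}

lemma pdx_energyDensity (hv : ContDiff ℝ 2 (uncurry v)) :
    pdx (energyDensity v) = 2 * (v * pdx v + pdx v * pdx (pdx v) + pdy v * pdx (pdy v)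
      + (pdx v - pdy v) * (pdx (pdx v) - pdx (pdy v))) := by
  have hv₀ := hv.differentiable two_ne_zero
  have hp := (contDiff_pdx (m := 1) hv (by norm_num)).differentiable_one
  have hq := (contDiff_pdy (m := 1) hv (by norm_num)).differentiable_one
  have hpq : Differentiable ℝ (uncurry (pdx v - pdy v)) := hp.sub hq
  have hv2 : Differentiable ℝ (uncurry (v ^ 2)) := hv₀.pow 2
  have hp2 : Differentiable ℝ (uncurry (pdx v ^ 2)) := hp.pow 2
  have hq2 : Differentiable ℝ (uncurry (pdy v ^ 2)) := hq.pow 2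
  have hpq2 : Differentiable ℝ (uncurry ((pdx v - pdy v) ^ 2)) := hpq.pow 2
  have hS : Differentiable ℝ (uncurry (obliqueGradSq v)) := (hp2.add hq2).add hpq2
  have hp2q2 : Differentiable ℝ (uncurry (pdx v ^ 2 + pdy v ^ 2)) := hp2.add hq2
  rw [energyDensity, pdx_add hv2 hS, obliqueGradSq, pdx_add hp2q2 hpq2, pdx_add hp2 hq2,
    pdx_sq hv₀, pdx_sq hp, pdx_sq hq, pdx_sq hpq, pdx_sub hp hq]
  ring

lemma pdy_energyDensity (hv : ContDiff ℝ 2 (uncurry v)) :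
    pdy (energyDensity v) = 2 * (v * pdy v + pdx v * pdy (pdx v) + pdy v * pdy (pdy v)
      + (pdx v - pdy v) * (pdy (pdx v) - pdy (pdy v))) := by
  have hv₀ := hv.differentiable two_ne_zero
  have hp := (contDiff_pdx (m := 1) hv (by norm_num)).differentiable_one
  have hq := (contDiff_pdy (m := 1) hv (by norm_num)).differentiable_one
  have hpq : Differentiable ℝ (uncurry (pdx v - pdy v)) := hp.sub hq
  have hv2 : Differentiable ℝ (uncurry (v ^ 2)) := hv₀.pow 2
  have hp2 : Differentiable ℝ (uncurry (pdx v ^ 2)) := hp.pow 2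
  have hq2 : Differentiable ℝ (uncurry (pdy v ^ 2)) := hq.pow 2
  have hpq2 : Differentiable ℝ (uncurry ((pdx v - pdy v) ^ 2)) := hpq.pow 2
  have hS : Differentiable ℝ (uncurry (obliqueGradSq v)) := (hp2.add hq2).add hpq2
  have hp2q2 : Differentiable ℝ (uncurry (pdx v ^ 2 + pdy v ^ 2)) := hp2.add hq2
  rw [energyDensity, pdy_add hv2 hS, obliqueGradSq, pdy_add hp2q2 hpq2, pdy_add hp2 hq2,
    pdy_sq hv₀, pdy_sq hp, pdy_sq hq, pdy_sq hpq, pdy_sub hp hq]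
  ring

lemma contDiff_energyDensity (hv : ContDiff ℝ 3 (uncurry v)) :
    ContDiff ℝ 2 (uncurry (energyDensity v)) := by
  have hp : ContDiff ℝ 2 (uncurry (pdx v)) := contDiff_pdx hv (by norm_num)
  have hq : ContDiff ℝ 2 (uncurry (pdy v)) := contDiff_pdy hv (by norm_num)
  exact ((hv.of_le (by norm_num)).pow 2).add
    (((hp.pow 2).add (hq.pow 2)).add ((hp.sub hq).pow 2))

lemma obliqueLaplacian_energyDensity (hv : ContDiff ℝ 3 (uncurry v)) :
    obliqueLaplacian (energyDensity v) =
      2 * (v * obliqueLaplacian v + pdx v * obliqueLaplacian (pdx v)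
        + pdy v * obliqueLaplacian (pdy v)
        + (pdx v - pdy v) * (obliqueLaplacian (pdx v) - obliqueLaplacian (pdy v)))
      + (obliqueGradSq v + obliqueGradSq (pdx v) + obliqueGradSq (pdy v)
        + obliqueGradSq (pdx v - pdy v)) := by
  have hv₂ : ContDiff ℝ 2 (uncurry v) := hv.of_le (by norm_num)
  have hp : ContDiff ℝ 2 (uncurry (pdx v)) := contDiff_pdx hv (by norm_num)
  have hq : ContDiff ℝ 2 (uncurry (pdy v)) := contDiff_pdy hv (by norm_num)
  have hpq : ContDiff ℝ 2 (uncurry (pdx v - pdy v)) := hp.sub hq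
  have hv2 : ContDiff ℝ 2 (uncurry (v ^ 2)) := hv₂.pow 2
  have hp2 : ContDiff ℝ 2 (uncurry (pdx v ^ 2)) := hp.pow 2
  have hq2 : ContDiff ℝ 2 (uncurry (pdy v ^ 2)) := hq.pow 2
  have hpq2 : ContDiff ℝ 2 (uncurry ((pdx v - pdy v) ^ 2)) := hpq.pow 2
  have hS : ContDiff ℝ 2 (uncurry (obliqueGradSq v)) := (hp2.add hq2).add hpq2
  have hp2q2 : ContDiff ℝ 2 (uncurry (pdx v ^ 2 + pdy v ^ 2)) := hp2.add hq2
  rw [energyDensity, obliqueLaplacian_add hv2 hS]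
  nth_rw 1 [obliqueGradSq]
  rw [obliqueLaplacian_add hp2q2 hpq2, obliqueLaplacian_add hp2 hq2, obliqueLaplacian_sq hv₂,
    obliqueLaplacian_sq hp, obliqueLaplacian_sq hq, obliqueLaplacian_sq hpq,
    obliqueLaplacian_sub hp hq]
  ring

lemma obliqueLaplacian_energyDensity_of_helmholtz (hv : ContDiff ℝ 3 (uncurry v))
    (h : uncurry (obliqueLaplacian v) =ᶠ[𝓝 (x, y)] uncurry (-v)) :
    obliqueLaplacian (energyDensity v) x y + energyDensity v x y =
      obliqueGradSq (pdx v) x y + obliqueGradSq (pdy v) x y + obliqueGradSq (pdx v - pdy v) x y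
        - v x y ^ 2 := by
  have hΔv : obliqueLaplacian v x y = -v x y := h.eq_of_nhds
  have hΔp : obliqueLaplacian (pdx v) x y = -pdx v x y := by
    simpa only [uncurry_apply_pair, pdx_obliqueLaplacian hv, pdx_neg, Pi.neg_apply]
      using (pdx_eventuallyEq h).eq_of_nhds
  have hΔq : obliqueLaplacian (pdy v) x y = -pdy v x y := by
    simpa only [uncurry_apply_pair, pdy_obliqueLaplacian hv, pdy_neg, Pi.neg_apply]
      using (pdy_eventuallyEq h).eq_of_nhds
  have hΔE := congrFun₂ (obliqueLaplacian_energyDensity hv) x y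
  simp only [energyDensity, obliqueGradSq, Pi.add_apply, Pi.sub_apply, Pi.mul_apply,
    Pi.pow_apply, Pi.ofNat_apply, hΔv, hΔp, hΔq] at hΔE ⊢
  linear_combination hΔE

/-- Since `obliqueLaplacian v = -v`, the gradient of the energy density is, up to a factor, the
trace-free Hessian of `v` applied to the gradient of `v`. In two variables this matrix is a multiple
of an isometry, so both sides are explicit in the squared norms of `v`, its gradient and its
trace-free Hessian. -/
lemma obliqueGradSq_energyDensity_le (hv : ContDiff ℝ 3 (uncurry v))
    (h : uncurry (obliqueLaplacian v) =ᶠ[𝓝 (x, y)] uncurry (-v)) :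
    obliqueGradSq (energyDensity v) x y ≤
      2 * energyDensity v x y *
        (obliqueLaplacian (energyDensity v) x y + energyDensity v x y) := by
  have hv₂ : ContDiff ℝ 2 (uncurry v) := hv.of_le (by norm_num)
  have hp : Differentiable ℝ (uncurry (pdx v)) :=
    (contDiff_pdx hv₂ (by norm_num)).differentiable_one
  have hq : Differentiable ℝ (uncurry (pdy v)) :=
    (contDiff_pdy hv₂ (by norm_num)).differentiable_one
  have hΔv : pdx (pdx v) x y - pdy (pdx v) x y + pdy (pdy v) x y = -v x y :=
    pdx_pdy_comm hv₂ ▸ h.eq_of_nhds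
  rw [obliqueLaplacian_energyDensity_of_helmholtz hv h]
  simp only [obliqueGradSq, pdx_energyDensity hv₂, pdy_energyDensity hv₂, pdx_pdy_comm hv₂,
    pdx_sub hp hq, pdy_sub hp hq, Pi.add_apply, Pi.sub_apply, Pi.mul_apply, Pi.pow_apply,
    Pi.ofNat_apply]
  simp only [energyDensity, obliqueGradSq, Pi.add_apply, Pi.sub_apply, Pi.pow_apply]
  have hv' : v x y = -(pdx (pdx v) x y - pdy (pdx v) x y + pdy (pdy v) x y) := by linarith
  set p := pdx v x y
  set q := pdy v x y
  set r := pdx (pdx v) x y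
  set s := pdy (pdx v) x y
  set t := pdy (pdy v) x y
  rw [hv', ← sub_nonneg]
  calc 0 ≤ 2 * (r - s + t) ^ 2 * ((r - s + t) ^ 2
        + 2 * ((r - s - t / 2) ^ 2 + 3 * (s - t / 2) ^ 2) + (p ^ 2 + q ^ 2 + (p - q) ^ 2)) := by
        positivity
    _ = _ := by ring

lemma not_isLocalMax_energyDensity_mul_exp (hv : ContDiff ℝ 3 (uncurry v))
    (hφ : ContDiff ℝ 2 (uncurry φ))
    (h : uncurry (obliqueLaplacian v) =ᶠ[𝓝 (x, y)] uncurry (-v))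
    (hpos : 0 < energyDensity v x y) (hφxy : 1 < obliqueLaplacian φ x y) :
    ¬IsLocalMax (fun p : ℝ × ℝ => energyDensity v p.1 p.2 * Real.exp (φ p.1 p.2)) (x, y) := by
  intro hmax
  have hle := obliqueLaplacian_le_of_isLocalMax_mul_exp (contDiff_energyDensity hv) hφ hpos hmax
  have hgrad := obliqueGradSq_energyDensity_le hv h
  have hweight : 0 < 2 * (obliqueLaplacian φ x y - 1) * energyDensity v x y ^ 2 := by
    have := sub_pos.2 hφxy
    positivity
  linarith

end EnergyInequality

section UniqueContinuation

variable {v : ℝ → ℝ → ℝ} {c x : ℝ}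

/-- The open triangle `0 < x < y < c`, the interior of `T` when `c = 1`. -/
def openTriangle (c : ℝ) : Set (ℝ × ℝ) := {p | 0 < p.1 ∧ p.1 < p.2 ∧ p.2 < c}

lemma isOpen_openTriangle : IsOpen (openTriangle c) :=
  (isOpen_lt continuous_const continuous_fst).inter
    ((isOpen_lt continuous_fst continuous_snd).inter (isOpen_lt continuous_snd continuous_const))

lemma isCompact_closedTriangle (c : ℝ) :
    IsCompact {p : ℝ × ℝ | 0 ≤ p.1 ∧ p.1 ≤ p.2 ∧ p.2 ≤ c} := by
  refine (isCompact_Icc (a := ((0 : ℝ), (0 : ℝ))) (b := (c, c))).of_isClosed_subset ?_ ?_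
  · exact (isClosed_le continuous_const continuous_fst).inter
      ((isClosed_le continuous_fst continuous_snd).inter
        (isClosed_le continuous_snd continuous_const))
  · rintro p ⟨h0, hle, hc⟩
    exact ⟨⟨h0, h0.trans hle⟩, ⟨hle.trans hc, hc⟩⟩

lemma T_subset_closure_openTriangle : T ⊆ closure (openTriangle 1) := by
  rintro ⟨x, y⟩ ⟨h0, hxy, h1⟩
  have hpath : Continuous fun r : ℝ => ((1 - r) * x + r / 3, (1 - r) * y + 2 * r / 3) := by fun_prop
  have hlim : Tendsto (fun r : ℝ => ((1 - r) * x + r / 3, (1 - r) * y + 2 * r / 3)) (𝓝[>] 0)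
      (𝓝 (x, y)) := by
    simpa using (hpath.tendsto 0).mono_left nhdsWithin_le_nhds
  refine mem_closure_of_tendsto hlim ?_
  filter_upwards [Ioo_mem_nhdsGT one_pos] with r hr
  have hr' : 0 ≤ 1 - r := sub_nonneg.2 hr.2.le
  have hx : 0 ≤ (1 - r) * x := mul_nonneg hr' h0
  have hy : (1 - r) * x ≤ (1 - r) * y := mul_le_mul_of_nonneg_left hxy hr'
  have hy1 : (1 - r) * y ≤ 1 - r := mul_le_of_le_one_right hr' h1
  refine ⟨?_, ?_, ?_⟩ <;> linarith [hr.1]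

lemma exists_isMaxOn_mul_exp {X : Type*} [TopologicalSpace X] {K : Set X} {E ψ : X → ℝ} {z : X}
    (hK : IsCompact K) (hE : ContinuousOn E K) (hψ : ContinuousOn ψ K) (hz : z ∈ K)
    (hEz : 0 < E z) (hψz : 0 < ψ z) (τ₀ : ℝ) :
    ∃ τ > τ₀, ∃ p ∈ K, 0 < E p ∧ ψ p ≠ 0 ∧
      IsMaxOn (fun q => E q * Real.exp (τ * ψ q)) K p := by
  obtain ⟨M, hM⟩ := (hK.image_of_continuousOn hE).bddAbove
  have hexp : Tendsto (fun τ => E z * Real.exp (τ * ψ z)) atTop atTop :=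
    (Real.tendsto_exp_atTop.comp (tendsto_id.atTop_mul_const hψz)).const_mul_atTop hEz
  obtain ⟨τ, hτ, hMτ⟩ := ((eventually_gt_atTop τ₀).and (hexp.eventually_gt_atTop M)).exists
  obtain ⟨p, hp, hmax⟩ := hK.exists_isMaxOn ⟨z, hz⟩
    (f := fun q => E q * Real.exp (τ * ψ q)) (by fun_prop)
  have hzp : E z * Real.exp (τ * ψ z) ≤ E p * Real.exp (τ * ψ p) := hmax hz
  refine ⟨τ, hτ, p, hp, ?_, fun hψp => ?_, hmax⟩
  · exact pos_of_mul_pos_left ((mul_pos hEz (Real.exp_pos _)).trans_le hzp) (Real.exp_pos _).le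
  · rw [hψp, mul_zero, Real.exp_zero, mul_one] at hzp
    exact (hMτ.trans_le hzp).not_ge (hM (mem_image_of_mem E hp))

lemma obliqueLaplacian_mul_sub (τ c x y : ℝ) :
    obliqueLaplacian (fun x y => τ * (x * (c - y))) x y = τ := by
  simp [obliqueLaplacian, pdx, pdy]

lemma energyDensity_pos {x y : ℝ} (hv : v x y ≠ 0) : 0 < energyDensity v x y := by
  simp only [energyDensity, obliqueGradSq, Pi.add_apply, Pi.sub_apply, Pi.pow_apply]
  positivity

lemma energyDensity_eq_zero_of_cauchy_data (hv : Differentiable ℝ (uncurry v))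
    (hdiag : ∀ᶠ r in 𝓝 x, v r r = 0) (hdiag' : pdx v x x = 0) : energyDensity v x x = 0 := by
  have hy : pdy v x x = 0 := by
    simpa [dirDeriv, hdiag'] using
      dirDeriv_one_one_eq_of_diagonal (hv (x, x)) hdiag (hasDerivAt_const x 0)
  simp [energyDensity, obliqueGradSq, hdiag.self_of_nhds, hdiag', hy]

lemma eqOn_zero_of_cauchy_data_diagonal (hv : ContDiff ℝ 3 (uncurry v))
    (heq : EqOn (uncurry (obliqueLaplacian v)) (uncurry (-v)) (openTriangle c))
    (hdiag : ∀ r ∈ Ioo 0 c, v r r = 0) (hdiag' : ∀ r ∈ Ioo 0 c, pdx v r r = 0) :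
    EqOn (uncurry v) 0 (openTriangle c) := by
  rintro ⟨x, y⟩ ⟨hx, hxy, hyc⟩
  by_contra hne
  have hE : Continuous (uncurry (energyDensity v)) := (contDiff_energyDensity hv).continuous
  -- The weight `x (c - y)` vanishes on the legs, so for large `τ` the maximum avoids them.
  obtain ⟨τ, hτ, ⟨a, b⟩, ⟨ha, hab, hb⟩, hpos, hweight, hmax⟩ :=
    exists_isMaxOn_mul_exp (z := (x, y)) (ψ := fun p => p.1 * (c - p.2))
      (isCompact_closedTriangle c) hE.continuousOn (by fun_prop) ⟨hx.le, hxy.le, hyc.le⟩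
      (energyDensity_pos hne) (mul_pos hx (sub_pos.2 hyc)) 1
  obtain ⟨ha₀, hbc⟩ : a ≠ 0 ∧ b ≠ c := by
    simpa [sub_eq_zero, eq_comm (a := c)] using hweight
  replace ha : 0 < a := ha.lt_of_ne' ha₀
  replace hb : b < c := hb.lt_of_ne hbc
  have hab' : a ≠ b := by
    rintro rfl
    refine hpos.ne' (energyDensity_eq_zero_of_cauchy_data (hv.differentiable three_ne_zero) ?_
      (hdiag' a ⟨ha, hb⟩))
    filter_upwards [Ioo_mem_nhds ha hb] with r hr using hdiag r hr
  have hnhds : openTriangle c ∈ 𝓝 (a, b) :=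
    isOpen_openTriangle.mem_nhds ⟨ha, hab.lt_of_ne hab', hb⟩
  refine not_isLocalMax_energyDensity_mul_exp (φ := fun x y => τ * (x * (c - y))) hv
    (by unfold uncurry; fun_prop) (heq.eventuallyEq_of_mem hnhds) hpos
    (by rwa [obliqueLaplacian_mul_sub]) ?_
  filter_upwards [hnhds] with p hp using hmax ⟨hp.1.le, hp.2.1.le, hp.2.2.le⟩

end UniqueContinuation

section Factorization

variable {f g m : ℝ → ℝ → ℝ} {n : WithTop ℕ∞} {c d : ℝ}

/-- The differential operator `∂ₓ³ + ∂ᵧ³ + ∂ₓ + ∂ᵧ` of the kernel equations. -/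
def kdvKernelOp (f : ℝ → ℝ → ℝ) : ℝ → ℝ → ℝ :=
  pdx (pdx (pdx f)) + pdy (pdy (pdy f)) + pdx f + pdy f

/-- The translate of `f` by `d` along the diagonal. -/
def diagShift (d : ℝ) (f : ℝ → ℝ → ℝ) (x y : ℝ) : ℝ := f (x + d) (y + d)

lemma pdx_diagShift : pdx (diagShift d f) = diagShift d (pdx f) :=
  funext₂ fun x y => deriv_comp_add_const (fun x' => f x' (y + d)) d x

lemma pdy_diagShift : pdy (diagShift d f) = diagShift d (pdy f) :=
  funext₂ fun x y => deriv_comp_add_const (fun y' => f (x + d) y') d y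

lemma obliqueLaplacian_diagShift :
    obliqueLaplacian (diagShift d f) = diagShift d (obliqueLaplacian f) := by
  simp only [obliqueLaplacian, pdx_diagShift, pdy_diagShift]
  rfl

lemma contDiff_diagShift (hf : ContDiff ℝ n (uncurry f)) :
    ContDiff ℝ n (uncurry (diagShift d f)) :=
  hf.comp ((contDiff_fst.add contDiff_const).prodMk (contDiff_snd.add contDiff_const))

lemma dirDeriv_one_one_obliqueLaplacian_add (hm : ContDiff ℝ 3 (uncurry m)) :
    dirDeriv 1 1 (obliqueLaplacian m + m) = kdvKernelOp m := by
  have hm₁ : Differentiable ℝ (uncurry m) := hm.differentiable three_ne_zero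
  have hΔ : Differentiable ℝ (uncurry (obliqueLaplacian m)) :=
    (contDiff_obliqueLaplacian hm).differentiable_one
  have hmx : ContDiff ℝ 2 (uncurry (pdx m)) := contDiff_pdx hm (by norm_num)
  have hmy : ContDiff ℝ 2 (uncurry (pdy m)) := contDiff_pdy hm (by norm_num)
  rw [dirDeriv_one_one, pdx_add hΔ hm₁, pdy_add hΔ hm₁, pdx_obliqueLaplacian hm,
    pdy_obliqueLaplacian hm, obliqueLaplacian, obliqueLaplacian, kdvKernelOp, pdx_pdy_comm hmx,
    pdx_pdy_comm hmy, pdx_pdy_comm (hm.of_le (by norm_num)), ← pdx_pdy_comm hmx]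
  ring

lemma kdvKernelOp_sub (hf : ContDiff ℝ 3 (uncurry f)) (hg : ContDiff ℝ 3 (uncurry g)) :
    kdvKernelOp (f - g) = kdvKernelOp f - kdvKernelOp g := by
  have hfg : ContDiff ℝ 3 (uncurry (f - g)) := hf.sub hg
  have hf₀ := hf.differentiable three_ne_zero
  have hg₀ := hg.differentiable three_ne_zero
  have hΔ := obliqueLaplacian_sub (hf.of_le (n := 3) (by norm_num)) (hg.of_le (by norm_num))
  have hF : Differentiable ℝ (uncurry (obliqueLaplacian f + f)) :=
    (contDiff_obliqueLaplacian hf).differentiable_one.add hf₀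
  have hG : Differentiable ℝ (uncurry (obliqueLaplacian g + g)) :=
    (contDiff_obliqueLaplacian hg).differentiable_one.add hg₀
  simp only [← dirDeriv_one_one_obliqueLaplacian_add hfg,
    ← dirDeriv_one_one_obliqueLaplacian_add hf, ← dirDeriv_one_one_obliqueLaplacian_add hg, hΔ,
    sub_add_sub_comm, dirDeriv_one_one, pdx_sub hF hG, pdy_sub hF hG]

lemma eqOn_diagShift_of_kdvKernelOp_eq_zero (hm : ContDiff ℝ 3 (uncurry m))
    (heq : EqOn (uncurry (kdvKernelOp m)) 0 (openTriangle c))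
    (hdiag : ∀ r ∈ Ioo 0 c, m r r = 0) (hdiag' : ∀ r ∈ Ioo 0 c, pdx m r r = 0) (hd : 0 ≤ d) :
    EqOn (uncurry (diagShift d m)) (uncurry m) (openTriangle (c - d)) := by
  have hm₂ : ContDiff ℝ 2 (uncurry m) := hm.of_le (by norm_num)
  have hH : Differentiable ℝ (uncurry (obliqueLaplacian m + m)) :=
    ((contDiff_obliqueLaplacian hm).add (hm.of_le (by norm_num))).differentiable_one
  have hH_shift : ∀ x y, (x, y) ∈ openTriangle (c - d) →
      obliqueLaplacian m (x + d) (y + d) + m (x + d) (y + d) = obliqueLaplacian m x y + m x y := by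
    rintro x y ⟨hx, hxy, hy⟩
    refine eq_of_dirDeriv_one_one_eq_zero hH hd fun r hr => ?_
    rw [dirDeriv_one_one_obliqueLaplacian_add hm]
    exact heq (x := (x + r, y + r)) ⟨by linarith [hr.1], by linarith, by linarith [hr.2]⟩
  have hdata : ∀ r ∈ Ioo 0 (c - d), r ∈ Ioo 0 c ∧ r + d ∈ Ioo 0 c := fun r hr =>
    ⟨⟨hr.1, by linarith [hr.2]⟩, ⟨by linarith [hr.1], by linarith [hr.2]⟩⟩
  have hzero : EqOn (uncurry (diagShift d m - m)) 0 (openTriangle (c - d)) := by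
    refine eqOn_zero_of_cauchy_data_diagonal ((contDiff_diagShift hm).sub hm) ?_ ?_ ?_
    · rintro ⟨x, y⟩ hxy
      rw [obliqueLaplacian_sub (contDiff_diagShift hm₂) hm₂, obliqueLaplacian_diagShift]
      simp only [uncurry_apply_pair, Pi.sub_apply, Pi.neg_apply, diagShift]
      linear_combination hH_shift x y hxy
    · intro r hr
      simp [diagShift, hdiag r (hdata r hr).1, hdiag _ (hdata r hr).2]
    · intro r hr
      rw [pdx_sub ((contDiff_diagShift hm).differentiable three_ne_zero)
        (hm.differentiable three_ne_zero), pdx_diagShift]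
      simp [diagShift, hdiag' r (hdata r hr).1, hdiag' _ (hdata r hr).2]
  exact fun p hp => sub_eq_zero.1 (hzero hp)

lemma eqOn_zero_of_kdvKernelOp_eq_zero (hm : ContDiff ℝ 3 (uncurry m))
    (heq : EqOn (uncurry (kdvKernelOp m)) 0 (openTriangle c))
    (hdiag : ∀ r ∈ Ioo 0 c, m r r = 0) (hdiag' : ∀ r ∈ Ioo 0 c, pdx m r r = 0)
    (htop : ∀ r ∈ Ioo 0 c, m r c = 0) :
    EqOn (uncurry m) 0 (openTriangle c) := by
  rintro ⟨x, y⟩ ⟨hx, hxy, hy⟩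
  have hconst : EqOn (fun d => m (x + d) (y + d)) (fun _ => m x y) (Ico 0 (c - y)) := fun d hd =>
    eqOn_diagShift_of_kdvKernelOp_eq_zero hm heq hdiag hdiag' hd.1
      (x := (x, y)) ⟨hx, hxy, by linarith [hd.2]⟩
  have hcont : Continuous fun d => m (x + d) (y + d) := by
    have := hm.continuous
    fun_prop
  have hend : c - y ∈ closure (Ico 0 (c - y)) := by
    rw [closure_Ico (sub_pos.2 hy).ne]
    exact right_mem_Icc.2 (sub_pos.2 hy).le
  calc m x y = m (x + (c - y)) (y + (c - y)) := (hconst.closure hcont continuous_const hend).symm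
    _ = 0 := by
      rw [add_sub_cancel]
      exact htop _ ⟨by linarith, by linarith⟩

end Factorization

section LeibnizIntegralRule

variable {E : Type*} [NormedAddCommGroup E] [NormedSpace ℝ E]

lemma hasFDerivAt_uncurry_of_hasDerivAt {f fx fy : ℝ → ℝ → E}
    (hx : ∀ x y, HasDerivAt (fun x' => f x' y) (fx x y) x)
    (hy : ∀ x y, HasDerivAt (fun y' => f x y') (fy x y) y)
    (hfx : Continuous (uncurry fx)) (hfy : Continuous (uncurry fy)) (p : ℝ × ℝ) :
    HasFDerivAt (uncurry f)
      ((ContinuousLinearMap.fst ℝ ℝ ℝ).smulRight (uncurry fx p)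
        + (ContinuousLinearMap.snd ℝ ℝ ℝ).smulRight (uncurry fy p)) p := by
  have hspan : Continuous fun z : E => ContinuousLinearMap.toSpanSingleton ℝ z :=
    (ContinuousLinearMap.toSpanSingletonCLE (𝕜 := ℝ) (E := E)).continuous
  have hstrict := hasStrictFDerivAt_uncurry_coprod (𝕜 := ℝ) (u := p) (f := f)
    (f₁ := fun x y => ContinuousLinearMap.toSpanSingleton ℝ (fx x y))
    (f₂ := fun x y => ContinuousLinearMap.toSpanSingleton ℝ (fy x y))
    (Eventually.of_forall fun q => (hx q.1 q.2).hasFDerivAt)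
    (Eventually.of_forall fun q => (hy q.1 q.2).hasFDerivAt)
    (hspan.comp hfx).continuousAt (hspan.comp hfy).continuousAt
  refine hstrict.hasFDerivAt.congr_fderiv ?_
  ext <;> simp [HasUncurry.uncurry, uncurry]

variable {A A' : ℝ → ℝ → E} {u v : ℝ → ℝ} {u' v' x : ℝ}

lemma hasDerivAt_intervalIntegral_of_continuous (hA : Continuous (uncurry A))
    (hA' : Continuous (uncurry A')) (hd : ∀ x ξ, HasDerivAt (fun x' => A x' ξ) (A' x ξ) x)
    (a b x : ℝ) :
    HasDerivAt (fun x' => ∫ ξ in a..b, A x' ξ) (∫ ξ in a..b, A' x ξ) x := by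
  obtain ⟨C, hC⟩ := (((isCompact_Icc (a := x - 1) (b := x + 1)).prod
    (isCompact_uIcc (a := a) (b := b))).image hA').isBounded.exists_norm_le
  refine (intervalIntegral.hasDerivAt_integral_of_dominated_loc_of_deriv_le (F := A) (F' := A')
    (bound := fun _ => C) (Icc_mem_nhds (sub_one_lt x) (lt_add_one x)) ?_ ?_ ?_ ?_ ?_ ?_).2
  · exact Eventually.of_forall fun x' => (hA.uncurry_left x').aestronglyMeasurable
  · exact (hA.uncurry_left x).intervalIntegrable _ _
  · exact (hA'.uncurry_left x).aestronglyMeasurable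
  · exact Eventually.of_forall fun ξ hξ x' hx' => hC _ ⟨(x', ξ), ⟨hx', uIoc_subset_uIcc hξ⟩, rfl⟩
  · exact intervalIntegrable_const
  · exact Eventually.of_forall fun ξ _ x' _ => hd x' ξ

lemma hasDerivAt_intervalIntegral_upper [CompleteSpace E] (hA : Continuous (uncurry A))
    (hA' : Continuous (uncurry A')) (hd : ∀ x ξ, HasDerivAt (fun x' => A x' ξ) (A' x ξ) x)
    (a : ℝ) (hv : HasDerivAt v v' x) :
    HasDerivAt (fun x' => ∫ ξ in a..v x', A x' ξ)
      (v' • A x (v x) + ∫ ξ in a..v x, A' x ξ) x := by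
  have hcont : Continuous (uncurry fun x' b => ∫ ξ in a..b, A' x' ξ) :=
    intervalIntegral.continuous_parametric_intervalIntegral_of_continuous
      (f := fun (p : ℝ × ℝ) ξ => A' p.1 ξ) (by fun_prop) continuous_snd
  have hpartials := hasFDerivAt_uncurry_of_hasDerivAt
    (fun x' b => hasDerivAt_intervalIntegral_of_continuous hA hA' hd a b x')
    (fun x' b => (hA.uncurry_left x').integral_hasStrictDerivAt a b |>.hasDerivAt)
    hcont hA (x, v x)
  refine (hpartials.comp_hasDerivAt (f := fun r => (r, v r)) x
    ((hasDerivAt_id x).prodMk hv)).congr_deriv ?_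
  simp [uncurry, add_comm]

lemma hasDerivAt_intervalIntegral_of_hasDerivAt [CompleteSpace E] (hA : Continuous (uncurry A))
    (hA' : Continuous (uncurry A')) (hd : ∀ x ξ, HasDerivAt (fun x' => A x' ξ) (A' x ξ) x)
    (hu : HasDerivAt u u' x) (hv : HasDerivAt v v' x) :
    HasDerivAt (fun x' => ∫ ξ in u x'..v x', A x' ξ)
      (v' • A x (v x) - u' • A x (u x) + ∫ ξ in u x..v x, A' x ξ) x := by
  have hsplit : ∀ {B : ℝ → ℝ → E}, Continuous (uncurry B) → ∀ x',
      ∫ ξ in u x'..v x', B x' ξ = (∫ ξ in (0 : ℝ)..v x', B x' ξ) - ∫ ξ in (0 : ℝ)..u x', B x' ξ :=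
    fun hB x' => (intervalIntegral.integral_interval_sub_left
      ((hB.uncurry_left x').intervalIntegrable _ _)
      ((hB.uncurry_left x').intervalIntegrable _ _)).symm
  simp only [hsplit hA, hsplit hA' x]
  refine ((hasDerivAt_intervalIntegral_upper hA hA' hd 0 hv).sub
    (hasDerivAt_intervalIntegral_upper hA hA' hd 0 hu)).congr_deriv ?_
  abel

end LeibnizIntegralRule

section KernelComposition

variable {f f₁ f₂ g g₁ g₂ : ℝ → ℝ → ℝ} {x y : ℝ}

/-- The composition `∫_x^y f(x,ξ) g(ξ,y) dξ` of two Volterra kernels. -/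
def kernelComp (f g : ℝ → ℝ → ℝ) (x y : ℝ) : ℝ := ∫ ξ in x..y, f x ξ * g ξ y

/-- The diagonal values of `f`, as a function of two coordinates depending on the first only. -/
def diagFst (f : ℝ → ℝ → ℝ) (x _ : ℝ) : ℝ := f x x

/-- The diagonal values of `f`, as a function of two coordinates depending on the second only. -/
def diagSnd (f : ℝ → ℝ → ℝ) (_ y : ℝ) : ℝ := f y y

lemma contDiff_diagFst {n : WithTop ℕ∞} (hf : ContDiff ℝ n (uncurry f)) :
    ContDiff ℝ n (uncurry (diagFst f)) :=
  hf.comp (contDiff_fst.prodMk contDiff_fst)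

lemma contDiff_diagSnd {n : WithTop ℕ∞} (hf : ContDiff ℝ n (uncurry f)) :
    ContDiff ℝ n (uncurry (diagSnd f)) :=
  hf.comp (contDiff_snd.prodMk contDiff_snd)

lemma pdx_diagFst_mul (hf : ContDiff ℝ 1 (uncurry f)) (hg : ContDiff ℝ 1 (uncurry g)) :
    pdx (diagFst f * g) = diagFst (dirDeriv 1 1 f) * g + diagFst f * pdx g := by
  have hdiag : pdx (diagFst f) = diagFst (dirDeriv 1 1 f) := by
    rw [dirDeriv_one_one]
    exact funext₂ fun x _ => (hasDerivAt_diagonal (hf.differentiable_one (x, x))).deriv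
  rw [pdx_mul (contDiff_diagFst hf).differentiable_one hg.differentiable_one, hdiag]

lemma pdy_mul_diagSnd (hf : ContDiff ℝ 1 (uncurry f)) (hg : ContDiff ℝ 1 (uncurry g)) :
    pdy (f * diagSnd g) = pdy f * diagSnd g + f * diagSnd (dirDeriv 1 1 g) := by
  have hdiag : pdy (diagSnd g) = diagSnd (dirDeriv 1 1 g) := by
    rw [dirDeriv_one_one]
    exact funext₂ fun _ y => (hasDerivAt_diagonal (hg.differentiable_one (y, y))).deriv
  rw [pdy_mul hf.differentiable_one (contDiff_diagSnd hg).differentiable_one, hdiag]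

lemma intervalIntegrable_kernelComp (hf : Continuous (uncurry f)) (hg : Continuous (uncurry g))
    (x y : ℝ) : IntervalIntegrable (fun ξ => f x ξ * g ξ y) volume x y :=
  Continuous.intervalIntegrable (by fun_prop) _ _

lemma kernelComp_add_left (hf₁ : Continuous (uncurry f₁)) (hf₂ : Continuous (uncurry f₂))
    (hg : Continuous (uncurry g)) :
    kernelComp (f₁ + f₂) g = kernelComp f₁ g + kernelComp f₂ g := by
  funext x y
  simp only [kernelComp, Pi.add_apply, add_mul]
  exact intervalIntegral.integral_add (intervalIntegrable_kernelComp hf₁ hg x y)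
    (intervalIntegrable_kernelComp hf₂ hg x y)

lemma kernelComp_add_right (hf : Continuous (uncurry f)) (hg₁ : Continuous (uncurry g₁))
    (hg₂ : Continuous (uncurry g₂)) :
    kernelComp f (g₁ + g₂) = kernelComp f g₁ + kernelComp f g₂ := by
  funext x y
  simp only [kernelComp, Pi.add_apply, mul_add]
  exact intervalIntegral.integral_add (intervalIntegrable_kernelComp hf hg₁ x y)
    (intervalIntegrable_kernelComp hf hg₂ x y)

lemma continuous_kernelComp (hf : Continuous (uncurry f)) (hg : Continuous (uncurry g)) :
    Continuous (uncurry (kernelComp f g)) := by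
  have hcont : Continuous (uncurry fun (p : ℝ × ℝ) ξ => f p.1 ξ * g ξ p.2) := by fun_prop
  have hsplit : uncurry (kernelComp f g) = fun p : ℝ × ℝ =>
      (∫ ξ in (0 : ℝ)..p.2, f p.1 ξ * g ξ p.2) - ∫ ξ in (0 : ℝ)..p.1, f p.1 ξ * g ξ p.2 :=
    funext fun p => (intervalIntegral.integral_interval_sub_left
      ((hcont.uncurry_left p).intervalIntegrable _ _)
      ((hcont.uncurry_left p).intervalIntegrable _ _)).symm
  rw [hsplit]
  exact (intervalIntegral.continuous_parametric_intervalIntegral_of_continuous hcont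
    continuous_snd).sub
    (intervalIntegral.continuous_parametric_intervalIntegral_of_continuous hcont continuous_fst)

lemma hasDerivAt_kernelComp_fst (hf : ContDiff ℝ 1 (uncurry f)) (hg : Continuous (uncurry g))
    (x y : ℝ) :
    HasDerivAt (fun x' => kernelComp f g x' y)
      ((kernelComp (pdx f) g - diagFst f * g) x y) x := by
  have hf₀ := hf.continuous
  have hfx : Continuous (uncurry (pdx f)) := (contDiff_pdx (m := 0) hf (by norm_num)).continuous
  refine (hasDerivAt_intervalIntegral_of_hasDerivAt (A := fun x' ξ => f x' ξ * g ξ y)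
    (A' := fun x' ξ => pdx f x' ξ * g ξ y) (by fun_prop) (by fun_prop)
    (fun x' ξ => (hasDerivAt_pdx (hf.differentiable_one _)).mul_const _) (hasDerivAt_id x)
    (hasDerivAt_const x y)).congr_deriv ?_
  simp [kernelComp, diagFst, neg_add_eq_sub]

lemma hasDerivAt_kernelComp_snd (hf : Continuous (uncurry f)) (hg : ContDiff ℝ 1 (uncurry g))
    (x y : ℝ) :
    HasDerivAt (fun y' => kernelComp f g x y')
      ((kernelComp f (pdy g) + f * diagSnd g) x y) y := by
  have hg₀ := hg.continuous
  have hgy : Continuous (uncurry (pdy g)) := (contDiff_pdy (m := 0) hg (by norm_num)).continuous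
  refine (hasDerivAt_intervalIntegral_of_hasDerivAt (A := fun y' ξ => f x ξ * g ξ y')
    (A' := fun y' ξ => f x ξ * pdy g ξ y') (by fun_prop) (by fun_prop)
    (fun y' ξ => (hasDerivAt_pdy (hg.differentiable_one _)).const_mul _) (hasDerivAt_const y x)
    (hasDerivAt_id y)).congr_deriv ?_
  simp [kernelComp, diagSnd, add_comm]

lemma pdx_kernelComp (hf : ContDiff ℝ 1 (uncurry f)) (hg : Continuous (uncurry g)) :
    pdx (kernelComp f g) = kernelComp (pdx f) g - diagFst f * g :=
  funext₂ fun x y => (hasDerivAt_kernelComp_fst hf hg x y).deriv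

lemma pdy_kernelComp (hf : Continuous (uncurry f)) (hg : ContDiff ℝ 1 (uncurry g)) :
    pdy (kernelComp f g) = kernelComp f (pdy g) + f * diagSnd g :=
  funext₂ fun x y => (hasDerivAt_kernelComp_snd hf hg x y).deriv

lemma contDiff_kernelComp (n : ℕ) (hf : ContDiff ℝ n (uncurry f)) (hg : ContDiff ℝ n (uncurry g)) :
    ContDiff ℝ n (uncurry (kernelComp f g)) := by
  induction n generalizing f g with
  | zero => exact contDiff_zero.2 (continuous_kernelComp hf.continuous hg.continuous)
  | succ n ih =>
    rw [Nat.cast_succ] at hf hg ⊢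
    have hfn : ContDiff ℝ n (uncurry f) := hf.of_le le_self_add
    have hgn : ContDiff ℝ n (uncurry g) := hg.of_le le_self_add
    have hx : ContDiff ℝ n (uncurry (kernelComp (pdx f) g - diagFst f * g)) :=
      (ih (contDiff_pdx hf le_rfl) hgn).sub ((contDiff_diagFst hfn).mul hgn)
    have hy : ContDiff ℝ n (uncurry (kernelComp f (pdy g) + f * diagSnd g)) :=
      (ih hfn (contDiff_pdy hg le_rfl)).add (hfn.mul (contDiff_diagSnd hgn))
    exact contDiff_succ_iff_hasFDerivAt.2
      ⟨_, (contDiff_const.smulRight hx).add (contDiff_const.smulRight hy),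
        hasFDerivAt_uncurry_of_hasDerivAt
          (hasDerivAt_kernelComp_fst (hf.of_le le_add_self) hg.continuous)
          (hasDerivAt_kernelComp_snd hf.continuous (hg.of_le le_add_self))
          hx.continuous hy.continuous⟩

lemma pdx_pdx_pdx_kernelComp (hf : ContDiff ℝ 3 (uncurry f)) (hg : ContDiff ℝ 2 (uncurry g)) :
    pdx (pdx (pdx (kernelComp f g))) =
      kernelComp (pdx (pdx (pdx f))) g - diagFst (pdx (pdx f)) * g
        - (diagFst (dirDeriv 1 1 (pdx f)) * g + diagFst (pdx f) * pdx g)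
        - (diagFst (dirDeriv 1 1 (dirDeriv 1 1 f)) * g + 2 * diagFst (dirDeriv 1 1 f) * pdx g
          + diagFst f * pdx (pdx g)) := by
  have hf₁ : ContDiff ℝ 1 (uncurry f) := hf.of_le (by norm_num)
  have hg₁ : ContDiff ℝ 1 (uncurry g) := hg.of_le (by norm_num)
  have hfx : ContDiff ℝ 2 (uncurry (pdx f)) := contDiff_pdx hf (by norm_num)
  have hfx₁ : ContDiff ℝ 1 (uncurry (pdx f)) := hfx.of_le (by norm_num)
  have hfxx : ContDiff ℝ 1 (uncurry (pdx (pdx f))) := contDiff_pdx hfx (by norm_num)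
  have hgx : ContDiff ℝ 1 (uncurry (pdx g)) := contDiff_pdx hg (by norm_num)
  have hDf : ContDiff ℝ 1 (uncurry (dirDeriv 1 1 f)) := contDiff_dirDeriv hf (by norm_num)
  have hcomp : ∀ {h : ℝ → ℝ → ℝ}, ContDiff ℝ 1 (uncurry h) →
      Differentiable ℝ (uncurry (kernelComp h g)) := fun hh =>
    (contDiff_kernelComp 1 hh hg₁).differentiable_one
  have hmul : ∀ {h k : ℝ → ℝ → ℝ}, ContDiff ℝ 1 (uncurry h) → ContDiff ℝ 1 (uncurry k) →
      Differentiable ℝ (uncurry (diagFst h * k)) := fun hh hk =>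
    ((contDiff_diagFst hh).mul hk).differentiable_one
  have hsub : Differentiable ℝ (uncurry (kernelComp (pdx (pdx f)) g - diagFst (pdx f) * g)) :=
    (hcomp hfxx).sub (hmul hfx₁ hg₁)
  have hadd : Differentiable ℝ (uncurry (diagFst (dirDeriv 1 1 f) * g + diagFst f * pdx g)) :=
    (hmul hDf hg₁).add (hmul hf₁ hgx)
  rw [pdx_kernelComp hf₁ hg.continuous, pdx_sub (hcomp hfx₁) (hmul hf₁ hg₁),
    pdx_kernelComp hfx₁ hg.continuous, pdx_diagFst_mul hf₁ hg₁, pdx_sub hsub hadd,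
    pdx_sub (hcomp hfxx) (hmul hfx₁ hg₁), pdx_kernelComp hfxx hg.continuous,
    pdx_add (hmul hDf hg₁) (hmul hf₁ hgx), pdx_diagFst_mul hfx₁ hg₁, pdx_diagFst_mul hDf hg₁,
    pdx_diagFst_mul hf₁ hgx]
  ring

lemma pdy_pdy_pdy_kernelComp (hf : ContDiff ℝ 2 (uncurry f)) (hg : ContDiff ℝ 3 (uncurry g)) :
    pdy (pdy (pdy (kernelComp f g))) =
      kernelComp f (pdy (pdy (pdy g))) + f * diagSnd (pdy (pdy g))
        + (pdy f * diagSnd (pdy g) + f * diagSnd (dirDeriv 1 1 (pdy g)))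
        + (pdy (pdy f) * diagSnd g + 2 * pdy f * diagSnd (dirDeriv 1 1 g)
          + f * diagSnd (dirDeriv 1 1 (dirDeriv 1 1 g))) := by
  have hf₁ : ContDiff ℝ 1 (uncurry f) := hf.of_le (by norm_num)
  have hg₁ : ContDiff ℝ 1 (uncurry g) := hg.of_le (by norm_num)
  have hfy : ContDiff ℝ 1 (uncurry (pdy f)) := contDiff_pdy hf (by norm_num)
  have hgy : ContDiff ℝ 2 (uncurry (pdy g)) := contDiff_pdy hg (by norm_num)
  have hgy₁ : ContDiff ℝ 1 (uncurry (pdy g)) := hgy.of_le (by norm_num)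
  have hgyy : ContDiff ℝ 1 (uncurry (pdy (pdy g))) := contDiff_pdy hgy (by norm_num)
  have hDg : ContDiff ℝ 1 (uncurry (dirDeriv 1 1 g)) := contDiff_dirDeriv hg (by norm_num)
  have hcomp : ∀ {h : ℝ → ℝ → ℝ}, ContDiff ℝ 1 (uncurry h) →
      Differentiable ℝ (uncurry (kernelComp f h)) := fun hh =>
    (contDiff_kernelComp 1 hf₁ hh).differentiable_one
  have hmul : ∀ {h k : ℝ → ℝ → ℝ}, ContDiff ℝ 1 (uncurry h) → ContDiff ℝ 1 (uncurry k) →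
      Differentiable ℝ (uncurry (h * diagSnd k)) := fun hh hk =>
    (hh.mul (contDiff_diagSnd hk)).differentiable_one
  have hadd : Differentiable ℝ (uncurry (kernelComp f (pdy (pdy g)) + f * diagSnd (pdy g))) :=
    (hcomp hgyy).add (hmul hf₁ hgy₁)
  have hadd' : Differentiable ℝ (uncurry (pdy f * diagSnd g + f * diagSnd (dirDeriv 1 1 g))) :=
    (hmul hfy hg₁).add (hmul hf₁ hDg)
  rw [pdy_kernelComp hf.continuous hg₁, pdy_add (hcomp hgy₁) (hmul hf₁ hg₁),
    pdy_kernelComp hf.continuous hgy₁, pdy_mul_diagSnd hf₁ hg₁, pdy_add hadd hadd',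
    pdy_add (hcomp hgyy) (hmul hf₁ hgy₁), pdy_kernelComp hf.continuous hgyy,
    pdy_add (hmul hfy hg₁) (hmul hf₁ hDg), pdy_mul_diagSnd hf₁ hgy₁, pdy_mul_diagSnd hfy hg₁,
    pdy_mul_diagSnd hf₁ hDg]
  ring

lemma kernelComp_pdy_left (hf : ContDiff ℝ 1 (uncurry f)) (hg : ContDiff ℝ 1 (uncurry g)) :
    kernelComp (pdy f) g = f * diagSnd g - diagFst f * g - kernelComp f (pdx g) := by
  have hfy : Continuous (uncurry (pdy f)) := (contDiff_pdy (m := 0) hf (by norm_num)).continuous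
  have hgx : Continuous (uncurry (pdx g)) := (contDiff_pdx (m := 0) hg (by norm_num)).continuous
  funext x y
  have hparts := intervalIntegral.integral_mul_deriv_eq_deriv_mul (a := x) (b := y)
    (fun ξ _ => hasDerivAt_pdy (hf.differentiable_one (x, ξ)))
    (fun ξ _ => hasDerivAt_pdx (hg.differentiable_one (ξ, y)))
    ((hfy.uncurry_left x).intervalIntegrable x y) ((hgx.uncurry_right y).intervalIntegrable x y)
  simp only [kernelComp, diagFst, diagSnd, Pi.sub_apply, Pi.mul_apply]
  linear_combination hparts

lemma kernelComp_pdy_pdy_pdy_left (hf : ContDiff ℝ 3 (uncurry f)) (hg : ContDiff ℝ 3 (uncurry g)) :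
    kernelComp (pdy (pdy (pdy f))) g =
      pdy (pdy f) * diagSnd g - diagFst (pdy (pdy f)) * g
        - (pdy f * diagSnd (pdx g) - diagFst (pdy f) * pdx g)
        + (f * diagSnd (pdx (pdx g)) - diagFst f * pdx (pdx g))
        - kernelComp f (pdx (pdx (pdx g))) := by
  have hfy : ContDiff ℝ 2 (uncurry (pdy f)) := contDiff_pdy hf (by norm_num)
  have hgx : ContDiff ℝ 2 (uncurry (pdx g)) := contDiff_pdx hg (by norm_num)
  rw [kernelComp_pdy_left (contDiff_pdy hfy (by norm_num)) (hg.of_le (by norm_num)),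
    kernelComp_pdy_left (hfy.of_le (by norm_num)) (hgx.of_le (by norm_num)),
    kernelComp_pdy_left (hf.of_le (by norm_num)) (contDiff_pdx hgx (by norm_num))]
  ring

end KernelComposition

section Reciprocity

variable {f f' g g' k l : ℝ → ℝ → ℝ} {lam c x y : ℝ}

lemma kernelComp_kdvKernelOp_left (hf : ContDiff ℝ 3 (uncurry f)) (hg : Continuous (uncurry g)) :
    kernelComp (kdvKernelOp f) g = kernelComp (pdx (pdx (pdx f))) g
      + kernelComp (pdy (pdy (pdy f))) g + kernelComp (pdx f) g + kernelComp (pdy f) g := by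
  have hfx : ContDiff ℝ 2 (uncurry (pdx f)) := contDiff_pdx hf (by norm_num)
  have hfy : ContDiff ℝ 2 (uncurry (pdy f)) := contDiff_pdy hf (by norm_num)
  have hfxx : ContDiff ℝ 1 (uncurry (pdx (pdx f))) := contDiff_pdx hfx (by norm_num)
  have hfyy : ContDiff ℝ 1 (uncurry (pdy (pdy f))) := contDiff_pdy hfy (by norm_num)
  have hfxxx := (contDiff_pdx (m := 0) hfxx (by norm_num)).continuous
  have hfyyy := (contDiff_pdy (m := 0) hfyy (by norm_num)).continuous
  have hsum : Continuous (uncurry (pdx (pdx (pdx f)) + pdy (pdy (pdy f)))) := hfxxx.add hfyyy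
  have hsum' : Continuous (uncurry (pdx (pdx (pdx f)) + pdy (pdy (pdy f)) + pdx f)) :=
    hsum.add hfx.continuous
  rw [kdvKernelOp, kernelComp_add_left hsum' hfy.continuous hg,
    kernelComp_add_left hsum hfx.continuous hg, kernelComp_add_left hfxxx hfyyy hg]

lemma kernelComp_kdvKernelOp_right (hf : Continuous (uncurry f)) (hg : ContDiff ℝ 3 (uncurry g)) :
    kernelComp f (kdvKernelOp g) = kernelComp f (pdx (pdx (pdx g)))
      + kernelComp f (pdy (pdy (pdy g))) + kernelComp f (pdx g) + kernelComp f (pdy g) := by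
  have hgx : ContDiff ℝ 2 (uncurry (pdx g)) := contDiff_pdx hg (by norm_num)
  have hgy : ContDiff ℝ 2 (uncurry (pdy g)) := contDiff_pdy hg (by norm_num)
  have hgxx : ContDiff ℝ 1 (uncurry (pdx (pdx g))) := contDiff_pdx hgx (by norm_num)
  have hgyy : ContDiff ℝ 1 (uncurry (pdy (pdy g))) := contDiff_pdy hgy (by norm_num)
  have hgxxx := (contDiff_pdx (m := 0) hgxx (by norm_num)).continuous
  have hgyyy := (contDiff_pdy (m := 0) hgyy (by norm_num)).continuous
  have hsum : Continuous (uncurry (pdx (pdx (pdx g)) + pdy (pdy (pdy g)))) := hgxxx.add hgyyy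
  have hsum' : Continuous (uncurry (pdx (pdx (pdx g)) + pdy (pdy (pdy g)) + pdx g)) :=
    hsum.add hgx.continuous
  rw [kdvKernelOp, kernelComp_add_right hf hsum' hgy.continuous,
    kernelComp_add_right hf hsum hgx.continuous, kernelComp_add_right hf hgxxx hgyyy]

/-- The Leibniz rule behind the diagonal data of the kernels: integrating by parts moves `∂ᵧ` from
the left factor to `∂ₓ` on the right factor, which leaves the two kernel equations and terms
evaluated on the diagonal. -/
lemma kdvKernelOp_kernelComp (hf : ContDiff ℝ 3 (uncurry f)) (hg : ContDiff ℝ 3 (uncurry g)) :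
    kdvKernelOp (kernelComp f g) = kernelComp (kdvKernelOp f) g + kernelComp f (kdvKernelOp g)
      - 3 * (diagFst (dirDeriv 1 1 (pdx f)) * g + diagFst (dirDeriv 1 1 f) * pdx g)
      + 3 * (f * diagSnd (dirDeriv 1 1 (pdy g)) + pdy f * diagSnd (dirDeriv 1 1 g)) := by
  have hf₁ : ContDiff ℝ 1 (uncurry f) := hf.of_le (by norm_num)
  have hg₁ : ContDiff ℝ 1 (uncurry g) := hg.of_le (by norm_num)
  have hf₂ : ContDiff ℝ 2 (uncurry f) := hf.of_le (by norm_num)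
  have hg₂ : ContDiff ℝ 2 (uncurry g) := hg.of_le (by norm_num)
  rw [kernelComp_kdvKernelOp_left hf hg.continuous, kernelComp_kdvKernelOp_right hf.continuous hg,
    kernelComp_pdy_pdy_pdy_left hf hg, kernelComp_pdy_left hf₁ hg₁, kdvKernelOp,
    pdx_pdx_pdx_kernelComp hf hg₂, pdy_pdy_pdy_kernelComp hf₂ hg,
    pdx_kernelComp hf₁ hg.continuous, pdy_kernelComp hf.continuous hg₁,
    dirDeriv_one_one_dirDeriv hf₂, dirDeriv_one_one_dirDeriv hg₂]
  funext x y
  have hf_diag := congrFun₂ (dirDeriv_one_one_pdx_sub_pdy hf₂) x x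
  have hg_diag := congrFun₂ (dirDeriv_one_one_pdx_sub_pdy hg₂) y y
  have hDf := congrFun₂ (dirDeriv_one_one (f := f)) x x
  have hDg := congrFun₂ (dirDeriv_one_one (f := g)) y y
  simp only [Pi.add_apply, Pi.sub_apply, Pi.mul_apply, Pi.ofNat_apply, diagFst, diagSnd]
    at hf_diag hg_diag hDf hDg ⊢
  linear_combination g x y * hf_diag + f x y * hg_diag + pdx g x y * hDf - pdy f x y * hDg

lemma kernelComp_eq_mul_of_left (h : ∀ ξ ∈ uIcc x y, f' x ξ = c * f x ξ) :
    kernelComp f' g x y = c * kernelComp f g x y := by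
  rw [kernelComp, kernelComp, ← intervalIntegral.integral_const_mul]
  exact intervalIntegral.integral_congr fun ξ hξ => by simp only [h ξ hξ, mul_assoc]

lemma kernelComp_eq_mul_of_right (h : ∀ ξ ∈ uIcc x y, g' ξ y = c * g ξ y) :
    kernelComp f g' x y = c * kernelComp f g x y := by
  rw [kernelComp, kernelComp, ← intervalIntegral.integral_const_mul]
  exact intervalIntegral.integral_congr fun ξ hξ => by simp only [h ξ hξ, mul_left_comm]

/-- The Cauchy data on the hypotenuse of `T` shared by the two kernels. -/
def HasKernelDiagonalData (lam : ℝ) (f : ℝ → ℝ → ℝ) : Prop :=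
  (∀ r ∈ Icc (0 : ℝ) 1, f r r = 0) ∧ ∀ r ∈ Icc (0 : ℝ) 1, pdx f r r = lam / 3 * (1 - r)

lemma HasKernelDiagonalData.dirDeriv_eq_zero (h : HasKernelDiagonalData lam f)
    (hf : Differentiable ℝ (uncurry f)) (hx : x ∈ Ioo (0 : ℝ) 1) : dirDeriv 1 1 f x x = 0 :=
  dirDeriv_one_one_eq_of_diagonal (hf _) (eventually_of_mem (Icc_mem_nhds hx.1 hx.2) h.1)
    (hasDerivAt_const x 0)

lemma HasKernelDiagonalData.dirDeriv_pdx (h : HasKernelDiagonalData lam f)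
    (hf : ContDiff ℝ 2 (uncurry f)) (hx : x ∈ Ioo (0 : ℝ) 1) :
    dirDeriv 1 1 (pdx f) x x = -(lam / 3) :=
  dirDeriv_one_one_eq_of_diagonal
    ((contDiff_pdx (m := 1) hf (by norm_num)).differentiable_one _)
    (eventually_of_mem (Icc_mem_nhds hx.1 hx.2) h.2)
    ((((hasDerivAt_id x).const_sub 1).const_mul (lam / 3)).congr_deriv (by ring))

lemma HasKernelDiagonalData.dirDeriv_pdy (h : HasKernelDiagonalData lam f)
    (hf : ContDiff ℝ 2 (uncurry f)) (hx : x ∈ Ioo (0 : ℝ) 1) :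
    dirDeriv 1 1 (pdy f) x x = lam / 3 := by
  refine dirDeriv_one_one_eq_of_diagonal
    ((contDiff_pdy (m := 1) hf (by norm_num)).differentiable_one _) ?_
    ((((hasDerivAt_id x).const_sub 1).const_mul (-(lam / 3))).congr_deriv (by ring))
  filter_upwards [Ioo_mem_nhds hx.1 hx.2] with r hr
  have hD := h.dirDeriv_eq_zero (hf.differentiable two_ne_zero) hr
  rw [dirDeriv_one_one, Pi.add_apply, Pi.add_apply, h.2 r (Ioo_subset_Icc_self hr)] at hD
  rw [id_eq]
  linear_combination hD

lemma kdvKernelOp_kernelComp_of_diagonalData (hf : ContDiff ℝ 3 (uncurry f))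
    (hg : ContDiff ℝ 3 (uncurry g)) (hf_diag : HasKernelDiagonalData lam f)
    (hg_diag : HasKernelDiagonalData lam g) (hx : x ∈ Ioo (0 : ℝ) 1) (hy : y ∈ Ioo (0 : ℝ) 1) :
    kdvKernelOp (kernelComp f g) x y =
      kernelComp (kdvKernelOp f) g x y + kernelComp f (kdvKernelOp g) x y
        + lam * (f x y + g x y) := by
  rw [kdvKernelOp_kernelComp hf hg]
  simp only [Pi.add_apply, Pi.sub_apply, Pi.mul_apply, Pi.ofNat_apply, diagFst, diagSnd,
    hf_diag.dirDeriv_eq_zero (hf.differentiable three_ne_zero) hx,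
    hg_diag.dirDeriv_eq_zero (hg.differentiable three_ne_zero) hy,
    hf_diag.dirDeriv_pdx (hf.of_le (by norm_num)) hx,
    hg_diag.dirDeriv_pdy (hg.of_le (by norm_num)) hy]
  ring

lemma kdvKernelOp_kernelComp_of_kernels (hk : IsControllerKernel lam k)
    (hl : IsInverseControllerKernel lam l) (hxy : (x, y) ∈ openTriangle 1) :
    kdvKernelOp (kernelComp k l) x y = lam * (k x y + l x y) := by
  obtain ⟨hk_smooth, hk_eq, -, hk_diag⟩ := hk
  obtain ⟨hl_smooth, hl_eq, -, hl_diag⟩ := hl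
  obtain ⟨hx, hxy, hy⟩ : 0 < x ∧ x < y ∧ y < 1 := hxy
  have hk_comp : kernelComp (kdvKernelOp k) l x y = -lam * kernelComp k l x y :=
    kernelComp_eq_mul_of_left fun ξ hξ => by
      rw [uIcc_of_le hxy.le] at hξ
      exact hk_eq x ξ ⟨hx.le, hξ.1, hξ.2.trans hy.le⟩
  have hl_comp : kernelComp k (kdvKernelOp l) x y = lam * kernelComp k l x y :=
    kernelComp_eq_mul_of_right fun ξ hξ => by
      rw [uIcc_of_le hxy.le] at hξ
      exact hl_eq ξ y ⟨hx.le.trans hξ.1, hξ.2, hy.le⟩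
  rw [kdvKernelOp_kernelComp_of_diagonalData hk_smooth hl_smooth hk_diag hl_diag
    ⟨hx, hxy.trans hy⟩ ⟨hx.trans hxy, hy⟩, hk_comp, hl_comp]
  ring

/-- The defect of the reciprocity relation; it solves the homogeneous kernel equation. -/
def reciprocityDefect (k l : ℝ → ℝ → ℝ) : ℝ → ℝ → ℝ := l - k - kernelComp k l

lemma contDiff_reciprocityDefect (hk : ContDiff ℝ 3 (uncurry k)) (hl : ContDiff ℝ 3 (uncurry l)) :
    ContDiff ℝ 3 (uncurry (reciprocityDefect k l)) :=
  (hl.sub hk).sub (contDiff_kernelComp 3 hk hl)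

lemma kdvKernelOp_reciprocityDefect (hk : IsControllerKernel lam k)
    (hl : IsInverseControllerKernel lam l) :
    EqOn (uncurry (kdvKernelOp (reciprocityDefect k l))) 0 (openTriangle 1) := by
  rintro ⟨x, y⟩ hxy
  have hT : (x, y) ∈ T := ⟨hxy.1.le, hxy.2.1.le, hxy.2.2.le⟩
  have hkeq : kdvKernelOp k x y = -lam * k x y := hk.2.1 x y hT
  have hleq : kdvKernelOp l x y = lam * l x y := hl.2.1 x y hT
  have hlk : ContDiff ℝ 3 (uncurry (l - k)) := hl.1.sub hk.1
  rw [reciprocityDefect, kdvKernelOp_sub hlk (contDiff_kernelComp 3 hk.1 hl.1),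
    kdvKernelOp_sub hl.1 hk.1]
  simp only [uncurry_apply_pair, Pi.sub_apply, Pi.zero_apply, hkeq, hleq,
    kdvKernelOp_kernelComp_of_kernels hk hl hxy]
  ring

lemma reciprocityDefect_diagonal (hk : k x x = 0) (hl : l x x = 0) :
    reciprocityDefect k l x x = 0 := by
  simp [reciprocityDefect, kernelComp, hk, hl]

lemma pdx_reciprocityDefect_diagonal (hk : ContDiff ℝ 1 (uncurry k))
    (hl : ContDiff ℝ 1 (uncurry l)) (hkx : k x x = 0) (hkl : pdx k x x = pdx l x x) :
    pdx (reciprocityDefect k l) x x = 0 := by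
  have hlk : Differentiable ℝ (uncurry (l - k)) :=
    hl.differentiable_one.sub hk.differentiable_one
  rw [reciprocityDefect, pdx_sub hlk (contDiff_kernelComp 1 hk hl).differentiable_one,
    pdx_sub hl.differentiable_one hk.differentiable_one, pdx_kernelComp hk hl.continuous]
  simp [kernelComp, diagFst, hkx, hkl]

lemma reciprocityDefect_eq_zero_of_right (hk : k x y = 0) (hl : ∀ ξ ∈ uIcc x y, l ξ y = 0) :
    reciprocityDefect k l x y = 0 := by
  have hcomp : kernelComp k l x y = 0 * kernelComp k l x y :=
    kernelComp_eq_mul_of_right fun ξ hξ => by rw [hl ξ hξ, zero_mul]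
  rw [zero_mul] at hcomp
  simp [reciprocityDefect, hk, hl x left_mem_uIcc, hcomp]

lemma reciprocityDefect_eqOn_zero (hk : IsControllerKernel lam k)
    (hl : IsInverseControllerKernel lam l) :
    EqOn (uncurry (reciprocityDefect k l)) 0 (openTriangle 1) := by
  have heq := kdvKernelOp_reciprocityDefect hk hl
  obtain ⟨hk_smooth, -, hk_top, hk_diag, hk_diag'⟩ := hk
  obtain ⟨hl_smooth, -, hl_top, hl_diag, hl_diag'⟩ := hl
  refine eqOn_zero_of_kdvKernelOp_eq_zero (contDiff_reciprocityDefect hk_smooth hl_smooth) heq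
    (fun r hr => ?_) (fun r hr => ?_) fun r hr => ?_ <;>
    have hr' := Ioo_subset_Icc_self hr
  · exact reciprocityDefect_diagonal (hk_diag r hr') (hl_diag r hr')
  · exact pdx_reciprocityDefect_diagonal (hk_smooth.of_le (by norm_num))
      (hl_smooth.of_le (by norm_num)) (hk_diag r hr') ((hk_diag' r hr').trans (hl_diag' r hr').symm)
  · refine reciprocityDefect_eq_zero_of_right (hk_top r hr') fun ξ hξ => hl_top ξ ?_
    rw [uIcc_of_le hr'.2] at hξ
    exact ⟨hr'.1.trans hξ.1, hξ.2⟩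

end Reciprocity

theorem controller_kernel_reciprocity_general (lam : ℝ) (k l : ℝ → ℝ → ℝ)
    (hk : IsControllerKernel lam k) (hl : IsInverseControllerKernel lam l) :
    ∀ x y : ℝ, (x, y) ∈ T → l x y - k x y = ∫ ξ in x..y, k x ξ * l ξ y := by
  intro x y hxy
  have hcont : Continuous (uncurry (reciprocityDefect k l)) :=
    (contDiff_reciprocityDefect hk.1 hl.1).continuous
  have hdefect : reciprocityDefect k l x y = 0 :=
    (reciprocityDefect_eqOn_zero hk hl).closure hcont continuous_zero
      (T_subset_closure_openTriangle hxy)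
  exact sub_eq_zero.1 hdefect

/-- Reciprocity relation between the controller kernel and its inverse:
`l(x,y) - k(x,y) = ∫_x^y k(x,ξ) l(ξ,y) dξ` on `T`. -/
theorem controller_kernel_reciprocity (lam : ℝ) (hlam : 0 < lam)
    (k l : ℝ → ℝ → ℝ) (hk : IsControllerKernel lam k)
    (hl : IsInverseControllerKernel lam l) :
    ∀ x y : ℝ, (x, y) ∈ T →
      l x y - k x y = ∫ ξ in x..y, k x ξ * l ξ y :=
  controller_kernel_reciprocity_general lam k l hk hl
end
end

section
/- Let k : T → ℝ be a continuous function. Then there exists a unique continuous function l : T → ℝ such that l(x,y) − k(x,y) = ∫_x^y k(x,ξ) l(ξ,y) dξ for all (x,y) ∈ T; moreover, for this l and for every continuous function u : [0,1] → ℝ, if ω : [0,1] → ℝ is defined by ω(x) = u(x) − ∫_x^1 k(x,y) u(y) dy, then u(x) = ω(x) + ∫_x^1 l(x,y) ω(y) dy for all x ∈ [0,1]. In other words, the Volterra integral transformation with upper-triangular kernel k is invertible, with inverse given by a Volterra transformation of the same form. -/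
open MeasureTheory

noncomputable section

/-
The composition `(k ⋆ f)(x, y) = ∫ ξ in x..y, k (x, ξ) • f (ξ, y)` is associative by Fubini's
theorem on the triangle, and integrating over a shrinking interval `n` times gains a factor
`1 / n!`: `‖k ⋆ ⋯ ⋆ k ⋆ f‖ ≤ C (M (y - x)) ^ n / n!`. Hence `f = g + k ⋆ f` is solved by the
Neumann series `g + k ⋆ g + k ⋆ k ⋆ g + ⋯` and has no other continuous solution. With `g = k` this
gives `l`, and since `g + l ⋆ g` also solves `f = g + k ⋆ f`, the composition with `l` inverts the
transformation.
-/

open Set Function Filter Topology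
open scoped Nat

/-- The closed triangle `a ≤ x ≤ y ≤ b`, the domain of upper-triangular Volterra kernels
on `[a, b]`. -/
def volterraTriangle (a b : ℝ) : Set (ℝ × ℝ) :=
  {q : ℝ × ℝ | a ≤ q.1 ∧ q.1 ≤ q.2 ∧ q.2 ≤ b}

theorem isCompact_volterraTriangle (a b : ℝ) : IsCompact (volterraTriangle a b) := by
  refine (isCompact_Icc (a := (a, a)) (b := (b, b))).of_isClosed_subset ?_ ?_
  · exact (isClosed_le continuous_const continuous_fst).inter
      ((isClosed_le continuous_fst continuous_snd).inter
        (isClosed_le continuous_snd continuous_const))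
  · rintro ⟨x, y⟩ ⟨hax, hxy, hyb⟩
    exact ⟨⟨hax, hax.trans hxy⟩, ⟨hxy.trans hyb, hyb⟩⟩

namespace volterraTriangle

variable {a b ξ : ℝ} {q : ℝ × ℝ}

theorem fst_mk_mem (hq : q ∈ volterraTriangle a b) (hξ : ξ ∈ Icc q.1 q.2) :
    (q.1, ξ) ∈ volterraTriangle a b :=
  ⟨hq.1, hξ.1, hξ.2.trans hq.2.2⟩

theorem mk_snd_mem (hq : q ∈ volterraTriangle a b) (hξ : ξ ∈ Icc q.1 q.2) :
    (ξ, q.2) ∈ volterraTriangle a b :=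
  ⟨hq.1.trans hξ.1, hξ.2, hq.2.2⟩

end volterraTriangle

open volterraTriangle

section IntervalIntegral

theorem integral_sub_pow_div_factorial (x y : ℝ) (n : ℕ) :
    ∫ ξ in x..y, (y - ξ) ^ n / n ! = (y - x) ^ (n + 1) / (n + 1)! := by
  rw [intervalIntegral.integral_div, intervalIntegral.integral_comp_sub_left (fun t => t ^ n) y,
    integral_pow, Nat.factorial_succ]
  simp [field]

variable {E : Type*} [NormedAddCommGroup E] [NormedSpace ℝ E]

theorem continuous_intervalIntegral_of_continuous {X : Type*} [TopologicalSpace X]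
    {f : X → ℝ → E} (hf : Continuous (uncurry f)) {s t : X → ℝ} (hs : Continuous s)
    (ht : Continuous t) : Continuous fun p => ∫ ξ in s p..t p, f p ξ := by
  have hint (p : X) (c d : ℝ) : IntervalIntegrable (f p) volume c d :=
    (hf.comp (Continuous.prodMk_right p)).intervalIntegrable c d
  have hsub (p : X) :
      (∫ ξ in 0..t p, f p ξ) - ∫ ξ in 0..s p, f p ξ = ∫ ξ in s p..t p, f p ξ :=
    intervalIntegral.integral_interval_sub_left (hint p _ _) (hint p _ _)
  simp only [← hsub]
  exact (intervalIntegral.continuous_parametric_intervalIntegral_of_continuous hf ht).sub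
    (intervalIntegral.continuous_parametric_intervalIntegral_of_continuous hf hs)

theorem intervalIntegral_intervalIntegral_swap_triangle {F : ℝ → ℝ → E} {a b : ℝ} (hab : a ≤ b)
    (hF : ContinuousOn (uncurry F) (volterraTriangle a b)) :
    ∫ x in a..b, ∫ y in x..b, F x y = ∫ y in a..b, ∫ x in a..y, F x y := by
  let G : ℝ → ℝ → E := curry ((volterraTriangle a b).indicator (uncurry F))
  have hG : IntegrableOn (uncurry G) (uIoc a b ×ˢ uIoc a b) :=
    ((integrable_indicator_iff (isCompact_volterraTriangle a b).measurableSet).mpr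
      (hF.integrableOn_compact (isCompact_volterraTriangle a b))).integrableOn
  have integral_snd : ∀ x ∈ uIcc a b, ∫ y in a..b, G x y = ∫ y in x..b, F x y := by
    intro x hx
    rw [uIcc_of_le hab] at hx
    have hGx : G x = (Icc x b).indicator (F x) := by
      ext y
      simp [G, volterraTriangle, indicator, hx.1]
    rw [intervalIntegral.integral_of_le hab, intervalIntegral.integral_of_le hx.2, hGx,
      ← integral_Icc_eq_integral_Ioc, ← integral_Icc_eq_integral_Ioc,
      setIntegral_indicator measurableSet_Icc, inter_eq_right.mpr (Icc_subset_Icc_left hx.1)]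
  have integral_fst : ∀ y ∈ uIcc a b, ∫ x in a..b, G x y = ∫ x in a..y, F x y := by
    intro y hy
    rw [uIcc_of_le hab] at hy
    have hGy : (fun x => G x y) = (Icc a y).indicator (fun x => F x y) := by
      ext x
      simp [G, volterraTriangle, indicator, hy.2]
    rw [intervalIntegral.integral_of_le hab, intervalIntegral.integral_of_le hy.1, hGy,
      ← integral_Icc_eq_integral_Ioc, ← integral_Icc_eq_integral_Ioc,
      setIntegral_indicator measurableSet_Icc, inter_eq_right.mpr (Icc_subset_Icc_right hy.2)]
  rw [← intervalIntegral.integral_congr integral_snd,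
    ← intervalIntegral.integral_congr integral_fst]
  exact intervalIntegral_intervalIntegral_swap hG

end IntervalIntegral

variable {𝔸 E : Type*} [NormedRing 𝔸] [NormedAddCommGroup E] [Module 𝔸 E]

theorem intervalIntegrable_volterraComp [IsBoundedSMul 𝔸 E] {a b : ℝ} {k : ℝ × ℝ → 𝔸}
    {f : ℝ × ℝ → E} {q : ℝ × ℝ} (hk : ContinuousOn k (volterraTriangle a b))
    (hf : ContinuousOn f (volterraTriangle a b)) (hq : q ∈ volterraTriangle a b) :
    IntervalIntegrable (fun ξ => k (q.1, ξ) • f (ξ, q.2)) volume q.1 q.2 := by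
  refine ContinuousOn.intervalIntegrable ?_
  rw [uIcc_of_le hq.2.1]
  exact (hk.comp (by fun_prop) fun ξ hξ => fst_mk_mem hq hξ).smul
    (hf.comp (by fun_prop) fun ξ hξ => mk_snd_mem hq hξ)

variable [NormedSpace ℝ E]

/-- Volterra composition of an operator-valued kernel with a vector-valued one. For a function
`u` of one variable, the composition with `fun q => u q.1` at the point `(x, b)` is the Volterra
integral `∫ y in x..b, k (x, y) • u y`. -/
def volterraComp (k : ℝ × ℝ → 𝔸) (f : ℝ × ℝ → E) (q : ℝ × ℝ) : E :=
  ∫ ξ in q.1..q.2, k (q.1, ξ) • f (ξ, q.2)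

local infixr:70 " ⋆ " => volterraComp

/-- The Neumann series `g + k ⋆ g + k ⋆ k ⋆ g + ⋯` of the Volterra equation `f = g + k ⋆ f`,
as a pointwise sum. -/
def volterraNeumannSeries (k : ℝ × ℝ → 𝔸) (g : ℝ × ℝ → E) (q : ℝ × ℝ) : E :=
  ∑' n : ℕ, (volterraComp k)^[n] g q

section Composition

variable {a b : ℝ} {k k' l : ℝ × ℝ → 𝔸} {f f' : ℝ × ℝ → E}

theorem volterraComp_congr (hk : EqOn k k' (volterraTriangle a b))
    (hf : EqOn f f' (volterraTriangle a b)) : EqOn (k ⋆ f) (k' ⋆ f') (volterraTriangle a b) := by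
  intro q hq
  refine intervalIntegral.integral_congr fun ξ hξ => ?_
  rw [uIcc_of_le hq.2.1] at hξ
  simp only [hk (fst_mk_mem hq hξ), hf (mk_snd_mem hq hξ)]

variable [IsBoundedSMul 𝔸 E]

theorem continuousOn_volterraComp (hk : ContinuousOn k (volterraTriangle a b))
    (hf : ContinuousOn f (volterraTriangle a b)) :
    ContinuousOn (k ⋆ f) (volterraTriangle a b) := by
  -- Clamping `ξ` to `[x, y]` makes the integrand continuous in `ξ ∈ ℝ`.
  let clamp (q : ℝ × ℝ) (ξ : ℝ) : ℝ := max q.1 (min ξ q.2)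
  have clamp_mem {q : ℝ × ℝ} (hq : q ∈ volterraTriangle a b) (ξ : ℝ) :
      clamp q ξ ∈ Icc q.1 q.2 := ⟨le_max_left _ _, max_le hq.2.1 (min_le_right _ _)⟩
  have integrand_continuous : Continuous (uncurry fun (q : volterraTriangle a b) (ξ : ℝ) =>
      k (q.1.1, clamp q ξ) • f (clamp q ξ, q.1.2)) :=
    .smul (hk.comp_continuous (by fun_prop) fun p => fst_mk_mem p.1.2 (clamp_mem p.1.2 p.2))
      (hf.comp_continuous (by fun_prop) fun p => mk_snd_mem p.1.2 (clamp_mem p.1.2 p.2))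
  rw [continuousOn_iff_continuous_domRestrict]
  refine (continuous_intervalIntegral_of_continuous integrand_continuous
    (s := fun q => q.1.1) (t := fun q => q.1.2) (by fun_prop) (by fun_prop)).congr fun q => ?_
  refine intervalIntegral.integral_congr fun ξ hξ => ?_
  rw [uIcc_of_le q.2.2.1] at hξ
  simp only [clamp, min_eq_left hξ.2, max_eq_right hξ.1]

theorem volterraComp_add (hk : ContinuousOn k (volterraTriangle a b))
    (hf : ContinuousOn f (volterraTriangle a b)) (hf' : ContinuousOn f' (volterraTriangle a b)) :
    EqOn (k ⋆ (f + f')) (k ⋆ f + k ⋆ f') (volterraTriangle a b) := by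
  intro q hq
  simp only [volterraComp, Pi.add_apply, smul_add]
  exact intervalIntegral.integral_add (intervalIntegrable_volterraComp hk hf hq)
    (intervalIntegrable_volterraComp hk hf' hq)

theorem volterraComp_sub (hk : ContinuousOn k (volterraTriangle a b))
    (hf : ContinuousOn f (volterraTriangle a b)) (hf' : ContinuousOn f' (volterraTriangle a b)) :
    EqOn (k ⋆ (f - f')) (k ⋆ f - k ⋆ f') (volterraTriangle a b) := by
  intro q hq
  simp only [volterraComp, Pi.sub_apply, smul_sub]
  exact intervalIntegral.integral_sub (intervalIntegrable_volterraComp hk hf hq)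
    (intervalIntegrable_volterraComp hk hf' hq)

theorem add_volterraComp (hk : ContinuousOn k (volterraTriangle a b))
    (hk' : ContinuousOn k' (volterraTriangle a b)) (hf : ContinuousOn f (volterraTriangle a b)) :
    EqOn ((k + k') ⋆ f) (k ⋆ f + k' ⋆ f) (volterraTriangle a b) := by
  intro q hq
  simp only [volterraComp, Pi.add_apply, add_smul]
  exact intervalIntegral.integral_add (intervalIntegrable_volterraComp hk hf hq)
    (intervalIntegrable_volterraComp hk' hf hq)

theorem volterraComp_assoc [NormedAlgebra ℝ 𝔸] [IsScalarTower ℝ 𝔸 E] [CompleteSpace 𝔸]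
    [CompleteSpace E] (hk : ContinuousOn k (volterraTriangle a b))
    (hl : ContinuousOn l (volterraTriangle a b)) (hf : ContinuousOn f (volterraTriangle a b)) :
    EqOn ((k ⋆ l) ⋆ f) (k ⋆ l ⋆ f) (volterraTriangle a b) := by
  rintro ⟨x, y⟩ hq
  have hxy : x ≤ y := hq.2.1
  have smul_right : ∀ η ∈ uIcc x y, (∫ ξ in x..η, k (x, ξ) • l (ξ, η)) • f (η, y) =
      ∫ ξ in x..η, k (x, ξ) • l (ξ, η) • f (η, y) := by
    intro η hη
    rw [uIcc_of_le hxy] at hη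
    simpa only [ContinuousLinearMap.flip_apply, ContinuousLinearMap.lsmul_apply, smul_assoc] using
      (((ContinuousLinearMap.lsmul ℝ 𝔸).flip (f (η, y))).intervalIntegral_comp_comm
        (intervalIntegrable_volterraComp hk hl (fst_mk_mem hq hη))).symm
  have smul_left : ∀ ξ ∈ uIcc x y, k (x, ξ) • ∫ η in ξ..y, l (ξ, η) • f (η, y) =
      ∫ η in ξ..y, k (x, ξ) • l (ξ, η) • f (η, y) := by
    intro ξ hξ
    rw [uIcc_of_le hxy] at hξ
    exact ((ContinuousLinearMap.lsmul ℝ 𝔸 (k (x, ξ))).intervalIntegral_comp_comm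
      (intervalIntegrable_volterraComp hl hf (mk_snd_mem hq hξ))).symm
  have integrand_continuousOn : ContinuousOn
      (uncurry fun ξ η => k (x, ξ) • l (ξ, η) • f (η, y)) (volterraTriangle x y) :=
    (hk.comp (by fun_prop) fun p hp => fst_mk_mem hq ⟨hp.1, hp.2.1.trans hp.2.2⟩).smul
      ((hl.mono fun p hp => ⟨hq.1.trans hp.1, hp.2.1, hp.2.2.trans hq.2.2⟩).smul
        (hf.comp (by fun_prop) fun p hp => mk_snd_mem hq ⟨hp.1.trans hp.2.1, hp.2.2⟩))
  calc ((k ⋆ l) ⋆ f) (x, y)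
      = ∫ η in x..y, ∫ ξ in x..η, k (x, ξ) • l (ξ, η) • f (η, y) :=
        intervalIntegral.integral_congr smul_right
    _ = ∫ ξ in x..y, ∫ η in ξ..y, k (x, ξ) • l (ξ, η) • f (η, y) :=
        (intervalIntegral_intervalIntegral_swap_triangle hxy integrand_continuousOn).symm
    _ = (k ⋆ l ⋆ f) (x, y) := (intervalIntegral.integral_congr smul_left).symm

end Composition

section NeumannSeries

variable [IsBoundedSMul 𝔸 E] {a b : ℝ} {k : ℝ × ℝ → 𝔸} {f f' g : ℝ × ℝ → E}

theorem continuousOn_iterate_volterraComp (hk : ContinuousOn k (volterraTriangle a b))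
    (hg : ContinuousOn g (volterraTriangle a b)) (n : ℕ) :
    ContinuousOn ((volterraComp k)^[n] g) (volterraTriangle a b) := by
  induction n with
  | zero => exact hg
  | succ n ih =>
    rw [iterate_succ_apply']
    exact continuousOn_volterraComp hk ih

theorem norm_iterate_volterraComp_le {M C : ℝ} (hk : ∀ q ∈ volterraTriangle a b, ‖k q‖ ≤ M)
    (hg : ∀ q ∈ volterraTriangle a b, ‖g q‖ ≤ C) (n : ℕ) :
    ∀ q ∈ volterraTriangle a b,
      ‖(volterraComp k)^[n] g q‖ ≤ C * ((M * (q.2 - q.1)) ^ n / n !) := by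
  induction n with
  | zero => simpa using hg
  | succ n ih =>
    rintro ⟨x, y⟩ hq
    have hM : 0 ≤ M := (norm_nonneg _).trans (hk _ hq)
    have integral_bound : ∫ ξ in x..y, M * (C * ((M * (y - ξ)) ^ n / n !)) =
        C * ((M * (y - x)) ^ (n + 1) / (n + 1)!) :=
      calc ∫ ξ in x..y, M * (C * ((M * (y - ξ)) ^ n / n !))
          = ∫ ξ in x..y, C * M ^ (n + 1) * ((y - ξ) ^ n / n !) := by
            congr 1 with ξ
            rw [mul_pow]
            ring
        _ = C * ((M * (y - x)) ^ (n + 1) / (n + 1)!) := by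
            rw [intervalIntegral.integral_const_mul, integral_sub_pow_div_factorial, mul_pow]
            ring
    rw [iterate_succ_apply', ← integral_bound]
    refine intervalIntegral.norm_integral_le_of_norm_le hq.2.1 (.of_forall fun ξ hξ => ?_)
      (Continuous.intervalIntegrable (by fun_prop) x y)
    have hξ' : ξ ∈ Icc x y := Ioc_subset_Icc_self hξ
    exact (norm_smul_le _ _).trans (mul_le_mul (hk _ (fst_mk_mem hq hξ'))
      (ih _ (mk_snd_mem hq hξ')) (norm_nonneg _) hM)

theorem exists_summable_norm_iterate_volterraComp_le (hk : ContinuousOn k (volterraTriangle a b))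
    (hg : ContinuousOn g (volterraTriangle a b)) :
    ∃ u : ℕ → ℝ, Summable u ∧
      ∀ n, ∀ q ∈ volterraTriangle a b, ‖(volterraComp k)^[n] g q‖ ≤ u n := by
  obtain ⟨M, hM⟩ := (isCompact_volterraTriangle a b).exists_bound_of_continuousOn hk
  obtain ⟨C, hC⟩ := (isCompact_volterraTriangle a b).exists_bound_of_continuousOn hg
  refine ⟨fun n => C * ((M * (b - a)) ^ n / n !),
    (Real.summable_pow_div_factorial _).mul_left C, fun n q hq => ?_⟩
  have hM₀ : 0 ≤ M := (norm_nonneg _).trans (hM q hq)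
  have hC₀ : 0 ≤ C := (norm_nonneg _).trans (hC q hq)
  have hq₀ : 0 ≤ q.2 - q.1 := sub_nonneg.mpr hq.2.1
  calc ‖(volterraComp k)^[n] g q‖ ≤ C * ((M * (q.2 - q.1)) ^ n / n !) :=
        norm_iterate_volterraComp_le hM hC n q hq
    _ ≤ C * ((M * (b - a)) ^ n / n !) := by
        gcongr
        exacts [hq.2.2, hq.1]

theorem eqOn_zero_of_eqOn_volterraComp (hk : ContinuousOn k (volterraTriangle a b))
    (hf : ContinuousOn f (volterraTriangle a b)) (h : EqOn f (k ⋆ f) (volterraTriangle a b)) :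
    EqOn f 0 (volterraTriangle a b) := by
  have eqOn_iterate (n : ℕ) : EqOn f ((volterraComp k)^[n] f) (volterraTriangle a b) := by
    induction n with
    | zero => exact eqOn_refl _ _
    | succ n ih =>
      rw [iterate_succ_apply']
      exact h.trans (volterraComp_congr (eqOn_refl _ _) ih)
  obtain ⟨u, hu, hfu⟩ := exists_summable_norm_iterate_volterraComp_le hk hf
  intro q hq
  refine norm_le_zero_iff.mp (ge_of_tendsto' hu.tendsto_atTop_zero fun n => ?_)
  rw [eqOn_iterate n hq]
  exact hfu n q hq

theorem eqOn_of_eqOn_add_volterraComp (hk : ContinuousOn k (volterraTriangle a b))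
    (hf : ContinuousOn f (volterraTriangle a b)) (hf' : ContinuousOn f' (volterraTriangle a b))
    (h : EqOn f (g + k ⋆ f) (volterraTriangle a b))
    (h' : EqOn f' (g + k ⋆ f') (volterraTriangle a b)) : EqOn f f' (volterraTriangle a b) := by
  have hsub : EqOn (f - f') (k ⋆ (f - f')) (volterraTriangle a b) := by
    intro q hq
    rw [volterraComp_sub hk hf hf' hq, Pi.sub_apply, h hq, h' hq]
    exact add_sub_add_left_eq_sub _ _ _
  exact fun q hq => sub_eq_zero.mp (eqOn_zero_of_eqOn_volterraComp hk (hf.sub hf') hsub hq)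

variable [CompleteSpace E]

theorem continuousOn_volterraNeumannSeries (hk : ContinuousOn k (volterraTriangle a b))
    (hg : ContinuousOn g (volterraTriangle a b)) :
    ContinuousOn (volterraNeumannSeries k g) (volterraTriangle a b) := by
  obtain ⟨u, hu, hgu⟩ := exists_summable_norm_iterate_volterraComp_le hk hg
  exact continuousOn_tsum (continuousOn_iterate_volterraComp hk hg) hu hgu

theorem volterraNeumannSeries_eqOn_add_volterraComp (hk : ContinuousOn k (volterraTriangle a b))
    (hg : ContinuousOn g (volterraTriangle a b)) :
    EqOn (volterraNeumannSeries k g) (g + k ⋆ volterraNeumannSeries k g)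
      (volterraTriangle a b) := by
  obtain ⟨M, hM⟩ := (isCompact_volterraTriangle a b).exists_bound_of_continuousOn hk
  obtain ⟨u, hu, hgu⟩ := exists_summable_norm_iterate_volterraComp_le hk hg
  have summable_iterate {q : ℝ × ℝ} (hq : q ∈ volterraTriangle a b) :
      Summable fun n => (volterraComp k)^[n] g q := .of_norm_bounded hu fun n => hgu n q hq
  intro q hq
  have hIoc {ξ : ℝ} (hξ : ξ ∈ uIoc q.1 q.2) : ξ ∈ Icc q.1 q.2 :=
    Ioc_subset_Icc_self (uIoc_of_le hq.2.1 ▸ hξ)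
  have hasSum_succ : HasSum (fun n => (volterraComp k)^[n + 1] g q)
      ((k ⋆ volterraNeumannSeries k g) q) := by
    simp only [iterate_succ_apply']
    refine intervalIntegral.hasSum_integral_of_dominated_convergence (fun n _ => M * u n)
      (fun n => ?_) (fun n => .of_forall fun ξ hξ => ?_) (.of_forall fun _ _ => hu.mul_left M)
      intervalIntegrable_const (.of_forall fun ξ hξ => ?_)
    · exact (intervalIntegrable_volterraComp hk
        (continuousOn_iterate_volterraComp hk hg n) hq).def'.aestronglyMeasurable
    · have hkξ := hM _ (fst_mk_mem hq (hIoc hξ))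
      exact (norm_smul_le _ _).trans (mul_le_mul hkξ (hgu n _ (mk_snd_mem hq (hIoc hξ)))
        (norm_nonneg _) ((norm_nonneg _).trans hkξ))
    · exact (summable_iterate (mk_snd_mem hq (hIoc hξ))).hasSum.const_smul _
  exact ((hasSum_nat_add_iff' 1).mp (by simpa using hasSum_succ)).tsum_eq

end NeumannSeries

section Resolvent

variable [IsBoundedSMul 𝔸 E] [NormedAlgebra ℝ 𝔸] [IsScalarTower ℝ 𝔸 E] [CompleteSpace 𝔸]
  [CompleteSpace E] {a b : ℝ} {k l : ℝ × ℝ → 𝔸}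

theorem eqOn_add_resolvent_volterraComp {f g : ℝ × ℝ → E}
    (hk : ContinuousOn k (volterraTriangle a b)) (hl : ContinuousOn l (volterraTriangle a b))
    (hf : ContinuousOn f (volterraTriangle a b)) (hg : ContinuousOn g (volterraTriangle a b))
    (hkl : EqOn l (k + k ⋆ l) (volterraTriangle a b))
    (hfg : EqOn f (g + k ⋆ f) (volterraTriangle a b)) :
    EqOn f (g + l ⋆ g) (volterraTriangle a b) := by
  have hlg := continuousOn_volterraComp hl hg
  refine eqOn_of_eqOn_add_volterraComp hk hf (hg.add hlg) hfg fun q hq => congrArg (g q + ·) ?_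
  calc (l ⋆ g) q = ((k + k ⋆ l) ⋆ g) q := volterraComp_congr hkl (eqOn_refl _ _) hq
    _ = (k ⋆ g) q + ((k ⋆ l) ⋆ g) q :=
        add_volterraComp hk (continuousOn_volterraComp hk hl) hg hq
    _ = (k ⋆ g) q + (k ⋆ l ⋆ g) q := by rw [volterraComp_assoc hk hl hg hq]
    _ = (k ⋆ (g + l ⋆ g)) q := (volterraComp_add hk hg hlg hq).symm

theorem eq_add_integral_resolvent {u ω : ℝ → E} (hk : ContinuousOn k (volterraTriangle a b))
    (hl : ContinuousOn l (volterraTriangle a b))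
    (hkl : EqOn l (k + k ⋆ l) (volterraTriangle a b)) (hu : ContinuousOn u (Icc a b))
    (hω : ∀ x ∈ Icc a b, ω x = u x - ∫ y in x..b, k (x, y) • u y) :
    ∀ x ∈ Icc a b, u x = ω x + ∫ y in x..b, l (x, y) • ω y := by
  intro x hx
  let f : ℝ × ℝ → E := fun q => u q.1
  have hf : ContinuousOn f (volterraTriangle a b) :=
    hu.comp continuous_fst.continuousOn fun q hq => ⟨hq.1, hq.2.1.trans hq.2.2⟩
  have hinv := eqOn_add_resolvent_volterraComp (g := f - k ⋆ f) hk hl hf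
    (hf.sub (continuousOn_volterraComp hk hf)) hkl fun q _ => (sub_add_cancel _ _).symm
  calc u x = (f - k ⋆ f) (x, b) + ∫ y in x..b, l (x, y) • (f - k ⋆ f) (y, b) :=
        hinv (show (x, b) ∈ volterraTriangle a b from ⟨hx.1, hx.2, le_rfl⟩)
    _ = ω x + ∫ y in x..b, l (x, y) • ω y := by
        rw [hω x hx]
        refine congrArg _ (intervalIntegral.integral_congr fun y hy => ?_)
        rw [uIcc_of_le hx.2] at hy
        exact congrArg _ (hω y ⟨hx.1.trans hy.1, hy.2⟩).symm

theorem volterra_transformation_invertible_general (k : ℝ → ℝ → 𝔸)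
    (hk : ContinuousOn (uncurry k) (volterraTriangle a b)) :
    ∃ l : ℝ → ℝ → 𝔸, ContinuousOn (uncurry l) (volterraTriangle a b) ∧
      (∀ x y : ℝ, (x, y) ∈ volterraTriangle a b → l x y - k x y = ∫ ξ in x..y, k x ξ * l ξ y) ∧
      (∀ l' : ℝ → ℝ → 𝔸, ContinuousOn (uncurry l') (volterraTriangle a b) →
        (∀ x y : ℝ, (x, y) ∈ volterraTriangle a b →
          l' x y - k x y = ∫ ξ in x..y, k x ξ * l' ξ y) →
        ∀ x y : ℝ, (x, y) ∈ volterraTriangle a b → l' x y = l x y) ∧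
      (∀ u : ℝ → E, ContinuousOn u (Icc a b) →
        ∀ ω : ℝ → E, (∀ x ∈ Icc a b, ω x = u x - ∫ y in x..b, k x y • u y) →
          ∀ x ∈ Icc a b, u x = ω x + ∫ y in x..b, l x y • ω y) := by
  let l := volterraNeumannSeries (uncurry k) (uncurry k)
  have hl : ContinuousOn l (volterraTriangle a b) := continuousOn_volterraNeumannSeries hk hk
  have hkl : EqOn l (uncurry k + uncurry k ⋆ l) (volterraTriangle a b) :=
    volterraNeumannSeries_eqOn_add_volterraComp hk hk
  refine ⟨curry l, hl, fun x y hxy => sub_eq_iff_eq_add'.mpr (hkl hxy),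
    fun l' hl' hkl' x y hxy => ?_, fun u hu ω hω => eq_add_integral_resolvent hk hl hkl hu hω⟩
  exact eqOn_of_eqOn_add_volterraComp hk hl' hl
    (fun q hq => sub_eq_iff_eq_add'.mp (hkl' q.1 q.2 hq)) hkl hxy

end Resolvent

/-- Invertibility of the Volterra transformation with upper-triangular kernel `k`:
there is a unique continuous kernel `l` on `T` satisfying the reciprocity relation,
and it provides the inverse Volterra transformation. -/
theorem volterra_transformation_invertible (k : ℝ → ℝ → ℝ)
    (hk : ContinuousOn (Function.uncurry k) T) :
    ∃ l : ℝ → ℝ → ℝ, ContinuousOn (Function.uncurry l) T ∧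
      (∀ x y : ℝ, (x, y) ∈ T → l x y - k x y = ∫ ξ in x..y, k x ξ * l ξ y) ∧
      (∀ l' : ℝ → ℝ → ℝ, ContinuousOn (Function.uncurry l') T →
        (∀ x y : ℝ, (x, y) ∈ T → l' x y - k x y = ∫ ξ in x..y, k x ξ * l' ξ y) →
        ∀ x y : ℝ, (x, y) ∈ T → l' x y = l x y) ∧
      (∀ u : ℝ → ℝ, ContinuousOn u (Set.Icc 0 1) →
        ∀ ω : ℝ → ℝ, (∀ x ∈ Set.Icc (0:ℝ) 1, ω x = u x - ∫ y in x..1, k x y * u y) →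
          ∀ x ∈ Set.Icc (0:ℝ) 1, u x = ω x + ∫ y in x..1, l x y * ω y) :=
  volterra_transformation_invertible_general k hk
end
end

section
/- Let k, l : T → ℝ be continuous, with l_x (the partial derivative of l with respect to its first argument) also continuous on T. Then there exist constants c₁, c₂ > 0 such that for every continuously differentiable function ω : [0,1] → ℝ and every x ∈ [0,1], the function F[ω](x) = 𝒦[ 𝓛[ω] · (ω' + 𝓛₁[ω]) ](x) satisfies |F[ω](x)| ≤ c₁ (‖ω‖_{L²} + |ω(x)|)(‖ω'‖_{L²} + |ω'(x)|) + c₂ (‖ω‖²_{L²} + |ω(x)|²). -/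
open MeasureTheory

noncomputable section

/-- The `L²(0,1)` norm. -/
def L2norm (f : ℝ → ℝ) : ℝ := (∫ x in (0:ℝ)..1, f x ^ 2) ^ (1/2 : ℝ)

/-- The functional `𝒦[v](x) = v(x) - ∫_x^1 k(x,y) v(y) dy`. -/
def opK (k : ℝ → ℝ → ℝ) (v : ℝ → ℝ) (x : ℝ) : ℝ := v x - ∫ y in x..1, k x y * v y

/-- The functional `𝓛[v](x) = v(x) + ∫_x^1 l(x,y) v(y) dy`. -/
def opL (l : ℝ → ℝ → ℝ) (v : ℝ → ℝ) (x : ℝ) : ℝ := v x + ∫ y in x..1, l x y * v y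

/-- The functional `𝓛₁[v](x) = l(x,x) v(x) + ∫_x^1 l_x(x,y) v(y) dy`. -/
def opL1 (l : ℝ → ℝ → ℝ) (v : ℝ → ℝ) (x : ℝ) : ℝ :=
  l x x * v x + ∫ y in x..1, pdx l x y * v y

/-- The functional `𝒫[v](x) = v(x) - ∫_x^1 p(x,y) v(y) dy`. -/
def opP (p : ℝ → ℝ → ℝ) (v : ℝ → ℝ) (x : ℝ) : ℝ := v x - ∫ y in x..1, p x y * v y

/-- The functional `ℛ[v](x) = v(x) + ∫_x^1 r(x,y) v(y) dy`. -/
def opR (r : ℝ → ℝ → ℝ) (v : ℝ → ℝ) (x : ℝ) : ℝ := v x + ∫ y in x..1, r x y * v y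

/-- The functional `𝒫₁[v](x) = p(x,x) v(x) - ∫_x^1 p_x(x,y) v(y) dy`. -/
def opP1 (p : ℝ → ℝ → ℝ) (v : ℝ → ℝ) (x : ℝ) : ℝ :=
  p x x * v x - ∫ y in x..1, pdx p x y * v y

/-!
The estimate concerns arbitrary `v, w ∈ L²(0, 1)`, applied to `v = ω` and `w = ω'`. On the compact
triangle the kernels are bounded by some `M ≥ 1`, so with `u = |v| + ‖v‖` both `|𝓛[v]|` and
`|𝓛₁[v]|` are pointwise at most `M u`. Hence `|𝓛[v] (w + 𝓛₁[v])| ≤ M u (|w| + M u)`. The first term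
of `𝒦` is controlled by this bound at `x`; the integral term is at most `M` times the integral of
the bound over `[0, 1]`, which Cauchy–Schwarz controls because `‖u‖ ≤ 2 ‖v‖`.
-/

lemma isCompact_T : IsCompact T := by
  have isClosed_T : IsClosed T :=
    (isClosed_le continuous_const continuous_fst).inter
      ((isClosed_le continuous_fst continuous_snd).inter
        (isClosed_le continuous_snd continuous_const))
  refine (isCompact_Icc (a := ((0 : ℝ), (0 : ℝ))) (b := (1, 1))).of_isClosed_subset isClosed_T ?_
  rintro ⟨x, y⟩ ⟨h0, hxy, h1⟩
  exact ⟨⟨h0, h0.trans hxy⟩, ⟨hxy.trans h1, h1⟩⟩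

/-- A bounded measurable kernel on the triangle `T`. Measurability makes the integrals of the
kernel against functions in `L²(0, 1)` genuine, rather than the junk value `0`. -/
structure IsBoundedKernel (m : ℝ → ℝ → ℝ) : Prop where
  measurable : Measurable (T.domRestrict (Function.uncurry m))
  exists_abs_le : ∃ C, ∀ p ∈ T, |m p.1 p.2| ≤ C

lemma isBoundedKernel_of_continuousOn {m : ℝ → ℝ → ℝ}
    (hm : ContinuousOn (Function.uncurry m) T) : IsBoundedKernel m where
  measurable := hm.domRestrict.measurable
  exists_abs_le := isCompact_T.exists_bound_of_continuousOn hm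

lemma memLp_restrict_Ioc_of_continuous {f : ℝ → ℝ} (hf : Continuous f) (p : ENNReal) (a b : ℝ) :
    MemLp f p (volume.restrict (Set.Ioc a b)) := by
  obtain ⟨C, hC⟩ := (isCompact_Icc (a := a) (b := b)).exists_bound_of_continuousOn hf.continuousOn
  refine MemLp.of_bound hf.aestronglyMeasurable C ?_
  filter_upwards [ae_restrict_mem measurableSet_Ioc] with x hx
  exact hC x (Set.Ioc_subset_Icc_self hx)

section L2

variable {f g : ℝ → ℝ}

lemma L2norm_nonneg (f : ℝ → ℝ) : 0 ≤ L2norm f :=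
  Real.rpow_nonneg (intervalIntegral.integral_nonneg zero_le_one fun _ _ => sq_nonneg _) _

lemma L2norm_eq_lpNorm (hf : AEStronglyMeasurable f (volume.restrict (Set.Ioc 0 1))) :
    L2norm f = lpNorm f 2 (volume.restrict (Set.Ioc 0 1)) := by
  simp [L2norm, lpNorm_eq_integral_norm_rpow_toReal two_ne_zero ENNReal.ofNat_ne_top hf,
    intervalIntegral.integral_of_le zero_le_one]

lemma integral_abs_mul_abs_le_L2norm_mul_L2norm
    (hf : MemLp f 2 (volume.restrict (Set.Ioc 0 1)))
    (hg : MemLp g 2 (volume.restrict (Set.Ioc 0 1))) :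
    ∫ y in (0 : ℝ)..1, |f y| * |g y| ≤ L2norm f * L2norm g := by
  have holder := integral_mul_norm_le_Lp_mul_Lq Real.HolderConjugate.two_two
    (by simpa using hf) (by simpa using hg)
  simpa [L2norm, intervalIntegral.integral_of_le zero_le_one] using holder

lemma integral_abs_le_L2norm (hf : MemLp f 2 (volume.restrict (Set.Ioc 0 1))) :
    ∫ y in (0 : ℝ)..1, |f y| ≤ L2norm f := by
  simpa [L2norm] using integral_abs_mul_abs_le_L2norm_mul_L2norm hf (memLp_const (1 : ℝ))

lemma L2norm_abs_add_const_le (hf : MemLp f 2 (volume.restrict (Set.Ioc 0 1))) (c : ℝ) :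
    L2norm (fun y => |f y| + c) ≤ L2norm f + |c| :=
  calc L2norm (fun y => |f y| + c)
      = lpNorm (|f| + fun _ => c) 2 (volume.restrict (Set.Ioc 0 1)) :=
        L2norm_eq_lpNorm (hf.abs.add (memLp_const c)).1
    _ ≤ lpNorm |f| 2 (volume.restrict (Set.Ioc 0 1))
          + lpNorm (fun _ => c) 2 (volume.restrict (Set.Ioc 0 1)) :=
        lpNorm_add_le hf.abs one_le_two
    _ = L2norm f + |c| := by
        rw [lpNorm_abs hf.1, ← L2norm_eq_lpNorm hf.1]
        simp

lemma intervalIntegrable_abs_mul_abs (hf : MemLp f 2 (volume.restrict (Set.Ioc 0 1)))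
    (hg : MemLp g 2 (volume.restrict (Set.Ioc 0 1))) :
    IntervalIntegrable (fun y => |f y| * |g y|) volume 0 1 :=
  (intervalIntegrable_iff_integrableOn_Ioc_of_le zero_le_one).2 (hf.abs.integrable_mul hg.abs)

lemma integral_abs_mul_add_mul_abs_le (hf : MemLp f 2 (volume.restrict (Set.Ioc 0 1)))
    (hg : MemLp g 2 (volume.restrict (Set.Ioc 0 1))) {M : ℝ} (hM : 0 ≤ M) :
    ∫ y in (0 : ℝ)..1, |f y| * (|g y| + M * |f y|) ≤ L2norm f * (L2norm g + M * L2norm f) :=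
  calc ∫ y in (0 : ℝ)..1, |f y| * (|g y| + M * |f y|)
      = (∫ y in (0 : ℝ)..1, |f y| * |g y|) + M * ∫ y in (0 : ℝ)..1, |f y| * |f y| := by
        rw [← intervalIntegral.integral_const_mul, ← intervalIntegral.integral_add
          (intervalIntegrable_abs_mul_abs hf hg)
          ((intervalIntegrable_abs_mul_abs hf hf).const_mul M)]
        congr with y
        ring
    _ ≤ L2norm f * L2norm g + M * (L2norm f * L2norm f) := by
        gcongr
        · exact integral_abs_mul_abs_le_L2norm_mul_L2norm hf hg
        · exact integral_abs_mul_abs_le_L2norm_mul_L2norm hf hf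
    _ = L2norm f * (L2norm g + M * L2norm f) := by ring

end L2

lemma abs_integral_mul_le_mul_integral {φ f g : ℝ → ℝ} {a b x M : ℝ} (hx : x ∈ Set.Icc a b)
    (hM : 0 ≤ M) (hφ : ∀ y ∈ Set.Ioc x b, |φ y| ≤ M) (hfg : ∀ y ∈ Set.Ioc x b, |f y| ≤ g y)
    (hg₀ : ∀ y ∈ Set.Ioc a b, 0 ≤ g y) (hg : IntervalIntegrable g volume a b) :
    |∫ y in x..b, φ y * f y| ≤ M * ∫ y in a..b, g y := by
  have hMg : IntervalIntegrable (fun y => M * g y) volume a b := hg.const_mul M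
  calc |∫ y in x..b, φ y * f y|
      ≤ ∫ y in x..b, M * g y := by
        rw [← Real.norm_eq_abs]
        refine intervalIntegral.norm_integral_le_of_norm_le hx.2 (.of_forall fun y hy => ?_)
          (hMg.mono_set (Set.uIcc_subset_uIcc_right (Set.Icc_subset_uIcc hx)))
        rw [Real.norm_eq_abs, abs_mul]
        exact mul_le_mul (hφ y hy) (hfg y hy) (abs_nonneg _) hM
    _ ≤ ∫ y in a..b, M * g y :=
        intervalIntegral.integral_mono_interval hx.1 hx.2 le_rfl
          (ae_restrict_of_forall_mem measurableSet_Ioc fun y hy => mul_nonneg hM (hg₀ y hy)) hMg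
    _ = M * ∫ y in a..b, g y := intervalIntegral.integral_const_mul M g

section Kernels

variable {k l m : ℝ → ℝ → ℝ} {v w : ℝ → ℝ} {x M : ℝ}

lemma abs_integral_kernel_mul_le (hm : ∀ p ∈ T, |m p.1 p.2| ≤ M)
    (hv : MemLp v 2 (volume.restrict (Set.Ioc 0 1))) (hx : x ∈ Set.Icc (0 : ℝ) 1) :
    |∫ y in x..1, m x y * v y| ≤ M * L2norm v := by
  have hM : 0 ≤ M := (abs_nonneg _).trans (hm (x, x) ⟨hx.1, le_rfl, hx.2⟩)
  have integrable_abs : IntervalIntegrable (fun y => |v y|) volume 0 1 :=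
    (intervalIntegrable_iff_integrableOn_Ioc_of_le zero_le_one).2 (hv.abs.integrable one_le_two)
  refine (abs_integral_mul_le_mul_integral hx hM (fun y hy => hm (x, y) ⟨hx.1, hy.1.le, hy.2⟩)
    (fun _ _ => le_rfl) (fun _ _ => abs_nonneg _) integrable_abs).trans ?_
  gcongr
  exact integral_abs_le_L2norm hv

lemma abs_opL_le (hM : 1 ≤ M) (hl : ∀ p ∈ T, |l p.1 p.2| ≤ M)
    (hv : MemLp v 2 (volume.restrict (Set.Ioc 0 1))) (hx : x ∈ Set.Icc (0 : ℝ) 1) :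
    |opL l v x| ≤ M * (|v x| + L2norm v) :=
  calc |opL l v x| ≤ |v x| + |∫ y in x..1, l x y * v y| := abs_add_le _ _
    _ ≤ M * |v x| + M * L2norm v :=
        add_le_add (le_mul_of_one_le_left (abs_nonneg _) hM)
          (abs_integral_kernel_mul_le hl hv hx)
    _ = M * (|v x| + L2norm v) := by ring

lemma abs_opL1_le (hl : ∀ p ∈ T, |l p.1 p.2| ≤ M)
    (hlx : ∀ p ∈ T, |pdx l p.1 p.2| ≤ M)
    (hv : MemLp v 2 (volume.restrict (Set.Ioc 0 1))) (hx : x ∈ Set.Icc (0 : ℝ) 1) :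
    |opL1 l v x| ≤ M * (|v x| + L2norm v) := by
  have diagonal : |l x x * v x| ≤ M * |v x| := by
    rw [abs_mul]
    gcongr
    exact hl (x, x) ⟨hx.1, le_rfl, hx.2⟩
  calc |opL1 l v x| ≤ |l x x * v x| + |∫ y in x..1, pdx l x y * v y| := abs_add_le _ _
    _ ≤ M * |v x| + M * L2norm v :=
        add_le_add diagonal (abs_integral_kernel_mul_le hlx hv hx)
    _ = M * (|v x| + L2norm v) := by ring

lemma abs_opL_mul_add_opL1_le (hM : 1 ≤ M) (hl : ∀ p ∈ T, |l p.1 p.2| ≤ M)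
    (hlx : ∀ p ∈ T, |pdx l p.1 p.2| ≤ M)
    (hv : MemLp v 2 (volume.restrict (Set.Ioc 0 1))) (hx : x ∈ Set.Icc (0 : ℝ) 1) :
    |opL l v x * (w x + opL1 l v x)| ≤
      M * ((|v x| + L2norm v) * (|w x| + M * (|v x| + L2norm v))) := by
  have : 0 ≤ M := zero_le_one.trans hM
  have hA : 0 ≤ L2norm v := L2norm_nonneg v
  rw [abs_mul, ← mul_assoc]
  gcongr
  · exact abs_opL_le hM hl hv hx
  · exact (abs_add_le _ _).trans (add_le_add_right (abs_opL1_le hl hlx hv hx) _)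

lemma abs_integral_kernel_mul_opL_mul_add_opL1_le (hM : 1 ≤ M)
    (hk : ∀ p ∈ T, |k p.1 p.2| ≤ M) (hl : ∀ p ∈ T, |l p.1 p.2| ≤ M)
    (hlx : ∀ p ∈ T, |pdx l p.1 p.2| ≤ M)
    (hv : MemLp v 2 (volume.restrict (Set.Ioc 0 1)))
    (hw : MemLp w 2 (volume.restrict (Set.Ioc 0 1))) (hx : x ∈ Set.Icc (0 : ℝ) 1) :
    |∫ y in x..1, k x y * (opL l v y * (w y + opL1 l v y))| ≤
      M ^ 2 * (2 * L2norm v * (L2norm w + M * (2 * L2norm v))) := by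
  have hM₀ : 0 ≤ M := zero_le_one.trans hM
  have hA : 0 ≤ L2norm v := L2norm_nonneg v
  have hB : 0 ≤ L2norm w := L2norm_nonneg w
  set u : ℝ → ℝ := fun y => |v y| + L2norm v
  have u_nonneg (y : ℝ) : 0 ≤ u y := by positivity
  have memLp_u : MemLp u 2 (volume.restrict (Set.Ioc 0 1)) := hv.abs.add (memLp_const _)
  have L2norm_u_nonneg : 0 ≤ L2norm u := L2norm_nonneg u
  have L2norm_u_le : L2norm u ≤ 2 * L2norm v := by
    simpa [abs_of_nonneg hA, two_mul] using L2norm_abs_add_const_le hv (L2norm v)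
  have majorant_integrable :
      IntervalIntegrable (fun y => M * (u y * (|w y| + M * u y))) volume 0 1 :=
    ((intervalIntegrable_iff_integrableOn_Ioc_of_le zero_le_one).2
      (memLp_u.integrable_mul (hw.abs.add (memLp_u.const_mul M)))).const_mul M
  have integral_le : ∫ y in (0 : ℝ)..1, u y * (|w y| + M * u y) ≤
      L2norm u * (L2norm w + M * L2norm u) := by
    simpa only [abs_of_nonneg (u_nonneg _)] using integral_abs_mul_add_mul_abs_le memLp_u hw hM₀
  calc |∫ y in x..1, k x y * (opL l v y * (w y + opL1 l v y))|
      ≤ M * ∫ y in (0 : ℝ)..1, M * (u y * (|w y| + M * u y)) :=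
        abs_integral_mul_le_mul_integral hx hM₀
          (fun y hy => hk (x, y) ⟨hx.1, hy.1.le, hy.2⟩)
          (fun y hy => abs_opL_mul_add_opL1_le hM hl hlx hv ⟨hx.1.trans hy.1.le, hy.2⟩)
          (fun y _ => by have := u_nonneg y; positivity) majorant_integrable
    _ = M ^ 2 * ∫ y in (0 : ℝ)..1, u y * (|w y| + M * u y) := by
        rw [intervalIntegral.integral_const_mul]
        ring
    _ ≤ M ^ 2 * (L2norm u * (L2norm w + M * L2norm u)) := by gcongr
    _ ≤ M ^ 2 * (2 * L2norm v * (L2norm w + M * (2 * L2norm v))) := by gcongr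

lemma pointwise_add_integral_majorant_le {A B a b : ℝ} (hA : 0 ≤ A) (hB : 0 ≤ B) (ha : 0 ≤ a)
    (hb : 0 ≤ b) (hM : 1 ≤ M) :
    M * ((a + A) * (b + M * (a + A))) + M ^ 2 * (2 * A * (B + M * (2 * A))) ≤
      2 * M ^ 2 * (A + a) * (B + b) + 6 * M ^ 3 * (A ^ 2 + a ^ 2) := by
  have mixed : M * ((a + A) * b) ≤ M ^ 2 * ((a + A) * b) := by
    gcongr
    exact le_self_pow₀ hM two_ne_zero
  have square : M ^ 2 * (a + A) ^ 2 ≤ M ^ 3 * (2 * (a ^ 2 + A ^ 2)) := by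
    gcongr
    · norm_num
    · exact add_sq_le
  have slack : 0 ≤ M ^ 2 * ((A + a) * b) + 2 * M ^ 2 * (a * B) + 4 * M ^ 3 * a ^ 2 := by
    positivity
  linarith

lemma abs_opK_opL_mul_add_opL1_le (hM : 1 ≤ M)
    (hk : ∀ p ∈ T, |k p.1 p.2| ≤ M) (hl : ∀ p ∈ T, |l p.1 p.2| ≤ M)
    (hlx : ∀ p ∈ T, |pdx l p.1 p.2| ≤ M)
    (hv : MemLp v 2 (volume.restrict (Set.Ioc 0 1)))
    (hw : MemLp w 2 (volume.restrict (Set.Ioc 0 1))) (hx : x ∈ Set.Icc (0 : ℝ) 1) :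
    |opK k (fun y => opL l v y * (w y + opL1 l v y)) x| ≤
      2 * M ^ 2 * (L2norm v + |v x|) * (L2norm w + |w x|)
        + 6 * M ^ 3 * (L2norm v ^ 2 + |v x| ^ 2) := by
  calc |opK k (fun y => opL l v y * (w y + opL1 l v y)) x|
      ≤ |opL l v x * (w x + opL1 l v x)|
          + |∫ y in x..1, k x y * (opL l v y * (w y + opL1 l v y))| := abs_sub _ _
    _ ≤ M * ((|v x| + L2norm v) * (|w x| + M * (|v x| + L2norm v)))
          + M ^ 2 * (2 * L2norm v * (L2norm w + M * (2 * L2norm v))) :=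
        add_le_add (abs_opL_mul_add_opL1_le hM hl hlx hv hx)
          (abs_integral_kernel_mul_opL_mul_add_opL1_le hM hk hl hlx hv hw hx)
    _ ≤ 2 * M ^ 2 * (L2norm v + |v x|) * (L2norm w + |w x|)
          + 6 * M ^ 3 * (L2norm v ^ 2 + |v x| ^ 2) :=
        pointwise_add_integral_majorant_le (L2norm_nonneg v) (L2norm_nonneg w) (abs_nonneg _)
          (abs_nonneg _) hM

end Kernels

theorem F_functional_bound_general (k l : ℝ → ℝ → ℝ) (hk : IsBoundedKernel k)
    (hl : IsBoundedKernel l) (hlx : IsBoundedKernel (pdx l)) :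
    ∃ c₁ > (0 : ℝ), ∃ c₂ > (0 : ℝ),
      ∀ v w : ℝ → ℝ, MemLp v 2 (volume.restrict (Set.Ioc 0 1)) →
        MemLp w 2 (volume.restrict (Set.Ioc 0 1)) → ∀ x ∈ Set.Icc (0 : ℝ) 1,
          |opK k (fun y => opL l v y * (w y + opL1 l v y)) x| ≤
            c₁ * (L2norm v + |v x|) * (L2norm w + |w x|) + c₂ * (L2norm v ^ 2 + |v x| ^ 2) := by
  obtain ⟨Ck, hCk⟩ := hk.exists_abs_le
  obtain ⟨Cl, hCl⟩ := hl.exists_abs_le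
  obtain ⟨Cx, hCx⟩ := hlx.exists_abs_le
  obtain ⟨M, hM, hkM, hlM, hxM⟩ : ∃ M : ℝ, 1 ≤ M ∧ Ck ≤ M ∧ Cl ≤ M ∧ Cx ≤ M :=
    ⟨max 1 (max Ck (max Cl Cx)), by simp⟩
  exact ⟨2 * M ^ 2, by positivity, 6 * M ^ 3, by positivity, fun v w hv hw x hx =>
    abs_opK_opL_mul_add_opL1_le hM (fun p hp => (hCk p hp).trans hkM)
      (fun p hp => (hCl p hp).trans hlM) (fun p hp => (hCx p hp).trans hxM) hv hw hx⟩

/-- Bound on the nonlinear functional `F[ω] = 𝒦[𝓛[ω](ω' + 𝓛₁[ω])]`. -/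
theorem F_functional_bound (k l : ℝ → ℝ → ℝ)
    (hk : ContinuousOn (Function.uncurry k) T)
    (hl : ContinuousOn (Function.uncurry l) T)
    (hlx : ContinuousOn (Function.uncurry (pdx l)) T) :
    ∃ c₁ > (0:ℝ), ∃ c₂ > (0:ℝ),
      ∀ ω : ℝ → ℝ, ContDiff ℝ 1 ω → ∀ x ∈ Set.Icc (0:ℝ) 1,
        |opK k (fun x' => opL l ω x' * (deriv ω x' + opL1 l ω x')) x| ≤
          c₁ * (L2norm ω + |ω x|) * (L2norm (deriv ω) + |deriv ω x|)
          + c₂ * (L2norm ω ^ 2 + |ω x| ^ 2) := by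
  obtain ⟨c₁, hc₁, c₂, hc₂, bound⟩ := F_functional_bound_general k l
    (isBoundedKernel_of_continuousOn hk) (isBoundedKernel_of_continuousOn hl)
    (isBoundedKernel_of_continuousOn hlx)
  exact ⟨c₁, hc₁, c₂, hc₂, fun ω hω => bound ω (deriv ω)
    (memLp_restrict_Ioc_of_continuous hω.continuous 2 0 1)
    (memLp_restrict_Ioc_of_continuous (hω.continuous_deriv le_rfl) 2 0 1)⟩
end
end

section
/- Let λ > 0. There exist constants a, b > 0 (depending only on λ) such that for every function ω̃ : [0,1] × [0,∞) → ℝ that is three times continuously differentiable in x and once continuously differentiable in t and satisfies ω̃_t + ω̃_x + ω̃_{xxx} + λ ω̃ = 0 on [0,1] × [0,∞) with ω̃(0,t) = 0, ω̃(1,t) = 0 and ω̃_x(1,t) = 0 for all t ≥ 0, one has for every t ≥ 0: |ω̃_{xx}(1,t)|² ≤ a ‖ω̃(·,t)‖²_{L²} + b ‖ω̃_t(·,t)‖²_{L²}. -/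
open MeasureTheory

noncomputable section

/-!
At a fixed time, test `u''' + u'` against `x ^ 3`. This weight vanishes to third order at `0` and
equals `1` at `1`, so integration by parts leaves no trace at `0`; under `u 1 = u' 1 = 0` it leaves
only `u'' 1`. Replacing `u''' + u'` by `-v - lam * u`, with `v` the time derivative, expresses
`u'' 1` through integrals of `u` and `v` against bounded weights, and Cauchy–Schwarz finishes.
-/

theorem L2norm_sq (f : ℝ → ℝ) : L2norm f ^ 2 = ∫ x in (0 : ℝ)..1, f x ^ 2 := by
  have h : 0 ≤ ∫ x in (0 : ℝ)..1, f x ^ 2 :=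
    intervalIntegral.integral_nonneg zero_le_one fun x _ => sq_nonneg (f x)
  rw [L2norm, ← Real.sqrt_eq_rpow, Real.sq_sqrt h]

theorem memLp_restrict_Ioc_of_continuousOn_Icc {E : Type*} [NormedAddCommGroup E] {a b : ℝ}
    {f : ℝ → E} (hf : ContinuousOn f (Set.Icc a b)) (p : ENNReal) :
    MemLp f p (volume.restrict (Set.Ioc a b)) := by
  obtain ⟨C, hC⟩ := isCompact_Icc.exists_bound_of_continuousOn hf
  have h_meas : AEStronglyMeasurable f (volume.restrict (Set.Ioc a b)) :=
    (hf.mono Set.Ioc_subset_Icc_self).aestronglyMeasurable measurableSet_Ioc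
  exact .of_bound h_meas C <| ae_restrict_of_forall_mem measurableSet_Ioc fun x hx =>
    hC x (Set.Ioc_subset_Icc_self hx)

theorem sq_integral_mul_le {α : Type*} [MeasurableSpace α] {μ : Measure α} {f g : α → ℝ}
    (hf : MemLp f 2 μ) (hg : MemLp g 2 μ) :
    (∫ x, f x * g x ∂μ) ^ 2 ≤ (∫ x, f x ^ 2 ∂μ) * ∫ x, g x ^ 2 ∂μ := by
  have inner_toLp {f g : α → ℝ} (hf : MemLp f 2 μ) (hg : MemLp g 2 μ) :
      inner ℝ (hf.toLp f) (hg.toLp g) = ∫ x, f x * g x ∂μ := by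
    rw [L2.inner_def]
    refine integral_congr_ae ?_
    filter_upwards [hf.coeFn_toLp, hg.coeFn_toLp] with x hfx hgx
    rw [hfx, hgx, Real.inner_apply]
  simpa only [inner_toLp, ← sq] using real_inner_mul_inner_self_le (hf.toLp f) (hg.toLp g)

theorem sq_integral_mul_le_mul_L2norm_sq {C : ℝ} {p f : ℝ → ℝ}
    (hp : ContinuousOn p (Set.Icc 0 1)) (hpC : ∀ x ∈ Set.Icc (0 : ℝ) 1, |p x| ≤ C)
    (hf : MemLp f 2 (volume.restrict (Set.Ioc 0 1))) :
    (∫ x in (0 : ℝ)..1, p x * f x) ^ 2 ≤ C ^ 2 * L2norm f ^ 2 := by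
  have h_weight : ∫ x in (0 : ℝ)..1, p x ^ 2 ≤ C ^ 2 := by
    calc ∫ x in (0 : ℝ)..1, p x ^ 2 ≤ ∫ _ in (0 : ℝ)..1, C ^ 2 :=
          intervalIntegral.integral_mono_on zero_le_one
            ((hp.pow 2).intervalIntegrable_of_Icc zero_le_one) intervalIntegrable_const
            fun x hx => sq_le_sq.2 ((hpC x hx).trans (le_abs_self C))
      _ = C ^ 2 := by simp
  calc (∫ x in (0 : ℝ)..1, p x * f x) ^ 2
      ≤ (∫ x in (0 : ℝ)..1, p x ^ 2) * ∫ x in (0 : ℝ)..1, f x ^ 2 := by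
        simpa only [intervalIntegral.integral_of_le zero_le_one] using
          sq_integral_mul_le (memLp_restrict_Ioc_of_continuousOn_Icc hp 2) hf
    _ ≤ C ^ 2 * L2norm f ^ 2 := by
        rw [← L2norm_sq f]
        gcongr

theorem integral_mul_iteratedDeriv_eq (n : ℕ) {φ u : ℝ → ℝ} (hφ : ContDiff ℝ n φ)
    (hu : ContDiff ℝ n u) (a b : ℝ) :
    ∫ x in a..b, φ x * iteratedDeriv n u x =
      ∑ k ∈ Finset.range n, (-1) ^ k * (iteratedDeriv k φ b * iteratedDeriv (n - 1 - k) u b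
        - iteratedDeriv k φ a * iteratedDeriv (n - 1 - k) u a)
      + (-1) ^ n * ∫ x in a..b, iteratedDeriv n φ x * u x := by
  induction n generalizing φ with
  | zero => simp
  | succ n ih =>
    have hφ' : ContDiff ℝ n (deriv φ) := hφ.deriv'
    have h_deriv_φ (x : ℝ) : HasDerivAt φ (deriv φ x) x :=
      (hφ.differentiable (by simp) x).hasDerivAt
    have h_deriv_u (x : ℝ) : HasDerivAt (iteratedDeriv n u) (iteratedDeriv (n + 1) u x) x := by
      rw [iteratedDeriv_succ]
      exact (hu.differentiable_iteratedDeriv n (by exact_mod_cast n.lt_succ_self) x).hasDerivAt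
    have h_parts := intervalIntegral.integral_mul_deriv_eq_deriv_mul (a := a) (b := b)
      (fun x _ => h_deriv_φ x) (fun x _ => h_deriv_u x)
      (hφ'.continuous.intervalIntegrable _ _)
      ((hu.continuous_iteratedDeriv (n + 1) le_rfl).intervalIntegrable _ _)
    have h_index (k : ℕ) : n - 1 - k = n - (k + 1) := by omega
    rw [h_parts, ih hφ' (hu.of_le (by exact_mod_cast n.le_succ)), Finset.sum_range_succ']
    simp only [← iteratedDeriv_succ', iteratedDeriv_zero, pow_succ, pow_zero, Nat.add_sub_cancel,
      Nat.sub_zero, h_index, mul_neg_one, neg_mul, Finset.sum_neg_distrib]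
    ring

theorem iteratedDeriv_two_sub_deriv_add_eq_integral {u : ℝ → ℝ} (hu : ContDiff ℝ 3 u) :
    iteratedDeriv 2 u 1 - 3 * deriv u 1 + 7 * u 1 =
      ∫ x in (0 : ℝ)..1, (x ^ 3 * (iteratedDeriv 3 u x + deriv u x) + (3 * x ^ 2 + 6) * u x) := by
  have h_third : ∫ x in (0 : ℝ)..1, x ^ 3 * iteratedDeriv 3 u x =
      iteratedDeriv 2 u 1 - 3 * deriv u 1 + 6 * u 1 - 6 * ∫ x in (0 : ℝ)..1, u x := by
    rw [integral_mul_iteratedDeriv_eq 3 (contDiff_fun_id.pow 3) hu]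
    norm_num [Finset.sum_range_succ, iteratedDeriv_pow, Nat.descFactorial, sub_eq_add_neg]
  have h_first : ∫ x in (0 : ℝ)..1, x ^ 3 * deriv u x =
      u 1 - ∫ x in (0 : ℝ)..1, 3 * x ^ 2 * u x := by
    rw [← iteratedDeriv_one, integral_mul_iteratedDeriv_eq 1 (contDiff_fun_id.pow 3)
      (hu.of_le (by norm_num))]
    simp [sub_eq_add_neg]
  have h_cont : Continuous u := hu.continuous
  have h_cont' : Continuous (deriv u) := hu.continuous_deriv (by norm_num)
  simp only [mul_add, add_mul]
  rw [intervalIntegral.integral_add, intervalIntegral.integral_add, intervalIntegral.integral_add,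
    intervalIntegral.integral_const_mul, h_third, h_first]
  · ring
  all_goals exact Continuous.intervalIntegrable (by fun_prop) _ _

section FixedTime

variable {lam : ℝ} {u v : ℝ → ℝ}

theorem continuousOn_forcing (hu : ContDiff ℝ 3 u)
    (h_eq : ∀ x ∈ Set.Icc (0 : ℝ) 1, v x + deriv u x + iteratedDeriv 3 u x + lam * u x = 0) :
    ContinuousOn v (Set.Icc 0 1) := by
  have h_cont' : Continuous (deriv u) := hu.continuous_deriv (by norm_num)
  have h_cont : Continuous fun x => -(deriv u x + iteratedDeriv 3 u x + lam * u x) := by fun_prop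
  exact h_cont.continuousOn.congr fun x hx => by linarith [h_eq x hx]

theorem iteratedDeriv_two_eq_integral_sub_integral (hu : ContDiff ℝ 3 u)
    (h_eq : ∀ x ∈ Set.Icc (0 : ℝ) 1, v x + deriv u x + iteratedDeriv 3 u x + lam * u x = 0)
    (h1 : u 1 = 0) (h1' : deriv u 1 = 0) :
    iteratedDeriv 2 u 1 =
      (∫ x in (0 : ℝ)..1, (3 * x ^ 2 + 6 - lam * x ^ 3) * u x)
        - ∫ x in (0 : ℝ)..1, x ^ 3 * v x := by
  have hu_cont : Continuous u := hu.continuous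
  have hv_cont : ContinuousOn v (Set.Icc 0 1) := continuousOn_forcing hu h_eq
  have h_trace := iteratedDeriv_two_sub_deriv_add_eq_integral hu
  rw [h1, h1', mul_zero, mul_zero, sub_zero, add_zero] at h_trace
  rw [h_trace, ← intervalIntegral.integral_sub]
  · refine intervalIntegral.integral_congr fun x hx => ?_
    rw [Set.uIcc_of_le zero_le_one] at hx
    linear_combination x ^ 3 * h_eq x hx
  all_goals exact ContinuousOn.intervalIntegrable_of_Icc zero_le_one (by fun_prop)

theorem trace_estimate_target_system_general (hu : ContDiff ℝ 3 u)
    (h_eq : ∀ x ∈ Set.Icc (0 : ℝ) 1, v x + deriv u x + iteratedDeriv 3 u x + lam * u x = 0)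
    (h1 : u 1 = 0) (h1' : deriv u 1 = 0) :
    |iteratedDeriv 2 u 1| ^ 2 ≤ 2 * (9 + |lam|) ^ 2 * L2norm u ^ 2 + 2 * L2norm v ^ 2 := by
  have hu_memLp : MemLp u 2 (volume.restrict (Set.Ioc 0 1)) :=
    memLp_restrict_Ioc_of_continuousOn_Icc hu.continuous.continuousOn 2
  have hv_memLp : MemLp v 2 (volume.restrict (Set.Ioc 0 1)) :=
    memLp_restrict_Ioc_of_continuousOn_Icc (continuousOn_forcing hu h_eq) 2
  have h_weight_u : ∀ x ∈ Set.Icc (0 : ℝ) 1, |3 * x ^ 2 + 6 - lam * x ^ 3| ≤ 9 + |lam| := by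
    rintro x ⟨hx0, hx1⟩
    calc |3 * x ^ 2 + 6 - lam * x ^ 3| ≤ |3 * x ^ 2 + 6| + |lam * x ^ 3| := abs_sub _ _
      _ = 3 * x ^ 2 + 6 + |lam| * x ^ 3 := by
        rw [abs_mul, abs_of_nonneg (by positivity), abs_of_nonneg (pow_nonneg hx0 3)]
      _ ≤ 3 * 1 + 6 + |lam| * 1 := by gcongr <;> exact pow_le_one₀ hx0 hx1
      _ = 9 + |lam| := by ring
  have h_weight_v : ∀ x ∈ Set.Icc (0 : ℝ) 1, |x ^ 3| ≤ 1 := fun x hx => by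
    rw [abs_of_nonneg (pow_nonneg hx.1 3)]
    exact pow_le_one₀ hx.1 hx.2
  rw [sq_abs, iteratedDeriv_two_eq_integral_sub_integral hu h_eq h1 h1']
  set I := ∫ x in (0 : ℝ)..1, (3 * x ^ 2 + 6 - lam * x ^ 3) * u x
  set J := ∫ x in (0 : ℝ)..1, x ^ 3 * v x
  have hI : I ^ 2 ≤ (9 + |lam|) ^ 2 * L2norm u ^ 2 :=
    sq_integral_mul_le_mul_L2norm_sq (by fun_prop) h_weight_u hu_memLp
  have hJ : J ^ 2 ≤ 1 ^ 2 * L2norm v ^ 2 :=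
    sq_integral_mul_le_mul_L2norm_sq (by fun_prop) h_weight_v hv_memLp
  linarith [sub_sq' I J, two_mul_le_add_sq I (-J)]

end FixedTime

/-- Trace estimate: for solutions of the target system
`ω̃_t + ω̃_x + ω̃_xxx + lam ω̃ = 0` with homogeneous boundary conditions,
`|ω̃_xx(1,t)|² ≤ a‖ω̃(·,t)‖²_{L²} + b‖ω̃_t(·,t)‖²_{L²}`. -/
theorem trace_estimate_target_system (lam : ℝ) (hlam : 0 < lam) :
    ∃ a > (0:ℝ), ∃ b > (0:ℝ),
      ∀ w : ℝ → ℝ → ℝ,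
        (∀ t : ℝ, ContDiff ℝ 3 fun x => w x t) →
        (∀ x : ℝ, ContDiff ℝ 1 fun t => w x t) →
        (∀ x ∈ Set.Icc (0:ℝ) 1, ∀ t ≥ (0:ℝ),
          deriv (fun t' => w x t') t + deriv (fun x' => w x' t) x
            + iteratedDeriv 3 (fun x' => w x' t) x + lam * w x t = 0) →
        (∀ t ≥ (0:ℝ), w 0 t = 0) →
        (∀ t ≥ (0:ℝ), w 1 t = 0) →
        (∀ t ≥ (0:ℝ), deriv (fun x' => w x' t) 1 = 0) →
        ∀ t ≥ (0:ℝ),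
          |iteratedDeriv 2 (fun x' => w x' t) 1| ^ 2 ≤
            a * L2norm (fun x => w x t) ^ 2
            + b * L2norm (fun x => deriv (fun t' => w x t') t) ^ 2 :=
  ⟨2 * (9 + |lam|) ^ 2, by positivity, 2, two_pos, fun w hx _ h_eq _ h1 h1' t ht =>
    trace_estimate_target_system_general (hx t) (fun x hx => h_eq x hx t ht) (h1 t ht)
      (h1' t ht)⟩
end
end

section
/- Let μ, C > 0 and let μ₀ satisfy 0 < μ₀ < μ. Let W : [0,∞) → [0,∞) be continuously differentiable with W'(t) ≤ −μ W(t) + C W(t)^{3/2} for all t ≥ 0. Set δ₀ = ((μ − μ₀)/C)². If W(0) < δ₀, then W(t) < δ₀ for all t ≥ 0 and W(t) ≤ W(0) e^{−μ₀ t} for all t ≥ 0. -/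
/-!
For an exponent `p > 1`, while `W` is at most the threshold `((μ - μ₀) / C) ^ (p - 1)⁻¹` the
superlinear term `C W ^ p` is at most `(μ - μ₀) W`, so `W' ≤ -μ₀ W ≤ 0`. A function that starts
below a threshold and cannot increase below it never gets past its initial value, so `W' ≤ -μ₀ W`
persists for all times and Grönwall's inequality gives the exponential decay.
-/

section RightDerivative

open Set

variable {f f' : ℝ → ℝ} {a b : ℝ}

lemma le_mul_exp_of_deriv_right_le_mul {K : ℝ} (hab : a ≤ b) (hf : ContinuousOn f (Icc a b))
    (hf' : ∀ x ∈ Ico a b, HasDerivWithinAt f (f' x) (Ici x) x)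
    (hle : ∀ x ∈ Ico a b, f' x ≤ K * f x) :
    f b ≤ f a * Real.exp (K * (b - a)) := by
  rw [← gronwallBound_ε0]
  exact le_gronwallBound_of_liminf_deriv_right_le hf
    (fun x hx _ hr => (hf' x hx).liminf_right_slope_le hr) le_rfl
    (fun x hx => (hle x hx).trans_eq (add_zero _).symm) b (right_mem_Icc.mpr hab)

lemma le_left_of_deriv_right_nonpos_of_lt {δ : ℝ} (hab : a ≤ b) (hf : ContinuousOn f (Icc a b))
    (hf' : ∀ x ∈ Ico a b, HasDerivWithinAt f (f' x) (Ici x) x) (hfa : f a < δ)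
    (hnonpos : ∀ x ∈ Ico a b, f x < δ → f' x ≤ 0) :
    f b ≤ f a := by
  by_contra! hlt
  have hab' : a < b := hab.lt_of_ne (by rintro rfl; exact hlt.false)
  obtain ⟨m, ham, hm⟩ := exists_between (lt_min hfa hlt)
  obtain ⟨hmδ, hmb⟩ := lt_min_iff.mp hm
  -- Fence `f` by the chord from `(a, f a)` to `(b, m)`: it increases strictly and stays below `δ`.
  set s := (m - f a) / (b - a) with hs
  have hs_pos : 0 < s := div_pos (sub_pos.mpr ham) (sub_pos.mpr hab')
  have hchord_right : f a + s * (b - a) = m := by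
    rw [hs, div_mul_cancel₀ _ (sub_pos.mpr hab').ne', add_sub_cancel]
  have hchord_lt : ∀ x ∈ Ico a b, f a + s * (x - a) < δ := fun x hx =>
    calc f a + s * (x - a) ≤ f a + s * (b - a) := by gcongr; exact hx.2.le
      _ = m := hchord_right
      _ < δ := hmδ
  have hchord_deriv (x : ℝ) : HasDerivAt (fun y => f a + s * (y - a)) s x := by
    simpa using (((hasDerivAt_id x).sub_const a).const_mul s).const_add (f a)
  have hfence : f b ≤ f a + s * (b - a) :=
    image_le_of_deriv_right_lt_deriv_boundary hf hf' (by simp) hchord_deriv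
      (fun x hx hfx => (hnonpos x hx (hfx ▸ hchord_lt x hx)).trans_lt hs_pos)
      (right_mem_Icc.mpr hab)
  exact (hfence.trans_eq hchord_right).not_gt hmb

lemma le_mul_exp_of_deriv_right_le_neg_mul_of_lt {k δ : ℝ} (hk : 0 ≤ k) (hab : a ≤ b)
    (hf : ContinuousOn f (Icc a b)) (hf' : ∀ x ∈ Ico a b, HasDerivWithinAt f (f' x) (Ici x) x)
    (hf_nonneg : ∀ x ∈ Ico a b, 0 ≤ f x) (hfa : f a < δ)
    (hle : ∀ x ∈ Ico a b, f x < δ → f' x ≤ -k * f x) :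
    f b ≤ f a * Real.exp (-k * (b - a)) := by
  have hlt : ∀ x ∈ Ico a b, f x < δ := fun x hx => by
    have hsub : Ico a x ⊆ Ico a b := Ico_subset_Ico_right hx.2.le
    refine (le_left_of_deriv_right_nonpos_of_lt hx.1 (hf.mono (Icc_subset_Icc_right hx.2.le))
      (fun y hy => hf' y (hsub hy)) hfa fun y hy hyδ => ?_).trans_lt hfa
    exact (hle y (hsub hy) hyδ).trans
      (mul_nonpos_of_nonpos_of_nonneg (neg_nonpos.mpr hk) (hf_nonneg y (hsub hy)))
  exact le_mul_exp_of_deriv_right_le_mul hab hf hf' fun x hx => hle x hx (hlt x hx)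

end RightDerivative

lemma neg_mul_add_mul_rpow_le_neg_mul {μ C μ₀ p w : ℝ} (hC : 0 < C) (hμ₀μ : μ₀ ≤ μ) (hp : 1 < p)
    (hw : 0 ≤ w) (hwδ : w ≤ ((μ - μ₀) / C) ^ (p - 1)⁻¹) :
    -μ * w + C * w ^ p ≤ -μ₀ * w := by
  have hrpow : C * w ^ (p - 1) ≤ μ - μ₀ := by
    rwa [Real.le_rpow_inv_iff_of_pos hw (div_nonneg (sub_nonneg.mpr hμ₀μ) hC.le) (sub_pos.mpr hp),
      le_div_iff₀' hC] at hwδ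
  have hsplit : w ^ p = w ^ (p - 1) * w := by
    rw [← Real.rpow_add_one' hw (by linarith), sub_add_cancel]
  calc -μ * w + C * w ^ p = -μ * w + C * w ^ (p - 1) * w := by rw [hsplit, mul_assoc]
    _ ≤ -μ * w + (μ - μ₀) * w := by gcongr
    _ = -μ₀ * w := by ring

theorem lyapunov_comparison_lemma_general {μ C μ₀ p : ℝ} (hC : 0 < C) (hμ₀ : 0 ≤ μ₀)
    (hμ₀μ : μ₀ ≤ μ) (hp : 1 < p) {W W' : ℝ → ℝ} (hW : ContinuousOn W (Set.Ici 0))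
    (hW' : ∀ t ≥ (0 : ℝ), HasDerivWithinAt W (W' t) (Set.Ici t) t)
    (hWnonneg : ∀ t ≥ (0 : ℝ), 0 ≤ W t)
    (hWineq : ∀ t ≥ (0 : ℝ), W' t ≤ -μ * W t + C * W t ^ p)
    (hW0 : W 0 < ((μ - μ₀) / C) ^ (p - 1)⁻¹) :
    (∀ t ≥ (0 : ℝ), W t < ((μ - μ₀) / C) ^ (p - 1)⁻¹) ∧
      ∀ t ≥ (0 : ℝ), W t ≤ W 0 * Real.exp (-μ₀ * t) := by
  have hdecay : ∀ t ≥ (0 : ℝ), W t ≤ W 0 * Real.exp (-μ₀ * t) := fun t ht => by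
    simpa only [sub_zero] using le_mul_exp_of_deriv_right_le_neg_mul_of_lt hμ₀ ht
      (hW.mono Set.Icc_subset_Ici_self) (fun s hs => hW' s hs.1) (fun s hs => hWnonneg s hs.1) hW0
      fun s hs hsδ => (hWineq s hs.1).trans
        (neg_mul_add_mul_rpow_le_neg_mul hC hμ₀μ hp (hWnonneg s hs.1) hsδ.le)
  refine ⟨fun t ht => ?_, hdecay⟩
  have hexp : Real.exp (-μ₀ * t) ≤ 1 :=
    Real.exp_le_one_iff.mpr (mul_nonpos_of_nonpos_of_nonneg (neg_nonpos.mpr hμ₀) ht)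
  calc W t ≤ W 0 * Real.exp (-μ₀ * t) := hdecay t ht
    _ ≤ W 0 := mul_le_of_le_one_right (hWnonneg 0 le_rfl) hexp
    _ < ((μ - μ₀) / C) ^ (p - 1)⁻¹ := hW0

/-- Comparison lemma: if `W' ≤ -μ W + C W^{3/2}` and `W(0) < δ₀ = ((μ-μ₀)/C)²`,
then `W` stays below `δ₀` and decays at the rate `μ₀`. -/
theorem lyapunov_comparison_lemma (μ C μ₀ : ℝ) (hμ : 0 < μ) (hC : 0 < C)
    (hμ₀ : 0 < μ₀) (hμ₀μ : μ₀ < μ)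
    (W : ℝ → ℝ) (hW : ContDiff ℝ 1 W)
    (hWnonneg : ∀ t ≥ (0:ℝ), 0 ≤ W t)
    (hWineq : ∀ t ≥ (0:ℝ), deriv W t ≤ -μ * W t + C * W t ^ (3/2 : ℝ))
    (δ₀ : ℝ) (hδ₀ : δ₀ = ((μ - μ₀) / C) ^ 2)
    (hW0 : W 0 < δ₀) :
    (∀ t ≥ (0:ℝ), W t < δ₀) ∧ (∀ t ≥ (0:ℝ), W t ≤ W 0 * Real.exp (-μ₀ * t)) := by
  obtain rfl : δ₀ = ((μ - μ₀) / C) ^ ((3 / 2 : ℝ) - 1)⁻¹ := by rw [hδ₀]; norm_num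
  exact lyapunov_comparison_lemma_general hC hμ₀.le hμ₀μ.le (by norm_num) hW.continuous.continuousOn
    (fun t _ => (hW.differentiable one_ne_zero t).hasDerivAt.hasDerivWithinAt) hWnonneg hWineq hW0
end
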